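/- Suppose A ⊂ F_p satisfies |A| ≤ p^{64/117}. Then max{|A+A|, |AA|} ≳ |A|^{39/32}, where ≳ hides absolute constants and powers of log|A|. -/

import Mathlib

open Pointwise

/-!
Write `S = A + A` and let `P ⊆ S` be the set of popular sums, those with about `#A ^ 2 / #S`
representations or more. At least half of the pairs in `A × A` have their sum in `P`, so by
Cauchy-Schwarz there are at least `#A ^ 4 / 16` quadruples `(a, b, c, d)` all of whose cross sums
`a + c, b + c, a + d, b + d` lie in `P`.
A second Cauchy-Schwarz turns this into `#A ^ 8 ≤ 256 * E(P) * ∑ t, r(t) ^ 4`, where `r(t)` counts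
the representations of `t` as a difference in `A`. Both factors are bounded through the product set:
since `(a * c) * c⁻¹ + b` does not depend on `c` and `a * (b + t)` is often in `A * A`, an energy is
at most a number of collisions of a map `(u, v, s) ↦ u * v + s` or `u * (v + s)`. Such collisions
are incidences between points and planes in three-space.

Incidences are bounded by the polynomial method. A point and a plane become two lines, in two
directions, over `K(X)`, which meet if the point lies on the plane. A polynomial of low degree
vanishing on a random sample of the lines of points vanishes on every line of a plane that contains
many points. If an irreducible factor `f` of it contains too many of these lines, then on `f = 0`
both directions are tangent to second order (`f ∣ tangentHessian i j f`). This forces `f` to divide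
a bilinear form `x - (ε * y * z + β * y + γ * z + δ)`, and few planes can have their lines on such a
surface because the planes in question have varied coefficients.

For `#A = ν ^ 64` all the fractional exponents become integers, and the terms with denominator `p`
are dominated by the others as soon as `ν ^ 114 ≤ p`.
-/

namespace SumProduct

open Finset
open MvPolynomial (aeval pderiv)
open Polynomial (C X derivative)
open scoped Polynomial PowerSeries Combinatorics.Additive

section LinearCurves

variable {σ R A : Type*} [CommRing R] [CommRing A] [Algebra R A]

theorem derivative_aeval [Fintype σ] (c : σ → A[X]) (f : MvPolynomial σ R) :
    derivative (aeval c f) = ∑ i, aeval c (pderiv i f) * derivative (c i) := by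
  classical
  induction f using MvPolynomial.induction_on with
  | C a => simp [IsScalarTower.algebraMap_apply R A A[X]]
  | add p q hp hq => simp only [map_add, hp, hq, add_mul, sum_add_distrib]
  | mul_X p i hp =>
    simp only [map_mul, Polynomial.derivative_mul, hp, Derivation.leibniz, smul_eq_mul, map_add,
      MvPolynomial.aeval_X, add_mul, sum_add_distrib, MvPolynomial.pderiv_X, sum_mul]
    have hi : ∑ j, aeval c p * aeval c (Pi.single (M := fun _ => MvPolynomial σ R) j 1 i)
          * derivative (c j) = aeval c p * derivative (c i) := by
      rw [sum_eq_single i (fun j _ hj => by simp [hj.symm]) (by simp), Pi.single_eq_same, map_one,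
        mul_one]
    rw [add_comm, hi]
    exact congrArg _ (sum_congr rfl fun j _ => by ring)

theorem natDegree_aeval_le {c : σ → A[X]} (hc : ∀ i, (c i).natDegree ≤ 1)
    (f : MvPolynomial σ R) : (aeval c f).natDegree ≤ f.totalDegree := by
  rw [MvPolynomial.aeval_def, MvPolynomial.eval₂]
  refine Polynomial.natDegree_sum_le_of_forall_le _ _ fun m hm => ?_
  simp only [IsScalarTower.algebraMap_apply R A A[X],
    ← Polynomial.C_eq_algebraMap]
  calc (C (algebraMap R A (f.coeff m)) * m.prod fun i k => c i ^ k).natDegree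
      ≤ ∑ i ∈ m.support, (c i ^ m i).natDegree :=
        (Polynomial.natDegree_C_mul_le _ _).trans (Polynomial.natDegree_prod_le _ _)
    _ ≤ ∑ i ∈ m.support, m i := sum_le_sum fun i _ =>
        Polynomial.natDegree_pow_le.trans (by simpa using Nat.mul_le_mul_left (m i) (hc i))
    _ ≤ f.totalDegree := MvPolynomial.le_totalDegree hm

theorem pderiv_pderiv_comm (i j : σ) (f : MvPolynomial σ R) :
    pderiv i (pderiv j f) = pderiv j (pderiv i f) := by
  classical
  have h : ⁅pderiv (R := R) i, pderiv (R := R) j⁆ = 0 :=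
    MvPolynomial.derivation_ext fun k => by
      simp only [Derivation.commutator_apply, MvPolynomial.pderiv_X, Pi.single_apply]
      split_ifs <;> simp
  simpa [Derivation.commutator_apply, sub_eq_zero] using DFunLike.congr_fun h f

end LinearCurves

section RuledSurfaces

variable {σ R D : Type*} [CommRing R] [CommRing D] [Algebra R D]

/-- The Hessian of `f` evaluated at the vector `∂ᵢf • eⱼ - ∂ⱼf • eᵢ`, which is tangent to the
hypersurface `f = 0`. It vanishes wherever this tangent vector spans a line contained in the
hypersurface. -/
noncomputable def tangentHessian (i j : σ) (f : MvPolynomial σ R) : MvPolynomial σ R :=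
  pderiv i (pderiv i f) * pderiv j f ^ 2
    - 2 * pderiv i (pderiv j f) * pderiv i f * pderiv j f
    + pderiv j (pderiv j f) * pderiv i f ^ 2

/-- The parametrised line `t ↦ P + t • (eⱼ - b • eᵢ)`. -/
noncomputable def shearLine [DecidableEq σ] (i j : σ) (b : D) (P : σ → D) : σ → D[X] :=
  fun k => C (P k) + C ((Pi.single j 1 - b • Pi.single i 1 : σ → D) k) * X

theorem natDegree_shearLine_le [DecidableEq σ] (i j : σ) (b : D) (P : σ → D) (k : σ) :
    (shearLine i j b P k).natDegree ≤ 1 := by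
  unfold shearLine
  compute_degree

theorem derivative_aeval_shearLine [Finite σ] [DecidableEq σ] (i j : σ) (b : D) (P : σ → D)
    (f : MvPolynomial σ R) :
    derivative (aeval (shearLine i j b P) f) =
      aeval (shearLine i j b P) (pderiv j f) - C b * aeval (shearLine i j b P) (pderiv i f) := by
  cases nonempty_fintype σ
  have hline (k : σ) : derivative (shearLine i j b P k) =
      (if k = j then 1 else 0) - if k = i then C b else 0 := by
    simp only [shearLine, Pi.sub_apply, Pi.smul_apply, Pi.single_apply, smul_eq_mul]
    split_ifs <;> simp
  simp only [derivative_aeval, hline, mul_sub, sum_sub_distrib, mul_ite, mul_one, mul_zero,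
    sum_ite_eq', mem_univ, if_true, mul_comm (C b)]

theorem aeval_comp_coeff_zero (c : σ → D[X]) (f : MvPolynomial σ R) :
    (aeval c f).coeff 0 = aeval (fun i => (c i).coeff 0) f := by
  simp only [Polynomial.coeff_zero_eq_eval_zero, ← Polynomial.coe_evalRingHom,
    MvPolynomial.aeval_def, MvPolynomial.hom_eval₂]
  congr 1
  ext
  simp [IsScalarTower.algebraMap_apply R D D[X]]

/-- The equation determines the Taylor coefficients of `h` recursively from those of order `0`
and `1`. -/
theorem eq_zero_of_mul_derivative_derivative_eq [IsDomain D] {a b c h : D[X]}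
    (ha : a.coeff 0 ≠ 0) (hcast : ∀ n : ℕ, 0 < n → n ≤ h.natDegree → (n : D) ≠ 0)
    (heq : a * derivative (derivative h) = b * h + c * derivative h)
    (h0 : h.coeff 0 = 0) (h1 : h.coeff 1 = 0) : h = 0 := by
  suffices hdvd : ∀ n, ∀ m < n, h.coeff m = 0 from
    Polynomial.ext fun n => hdvd (n + 1) n n.lt_succ_self
  intro n
  induction n with
  | zero => simp
  | succ n ih =>
    intro m hm
    rcases (Nat.lt_succ_iff_lt_or_eq.mp hm) with hm | rfl
    · exact ih m hm
    match m, ih with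
    | 0, _ => exact h0
    | 1, _ => exact h1
    | n + 2, ih =>
      have hh : X ^ (n + 1) ∣ h := Polynomial.X_pow_dvd_iff.mpr fun m hm => ih m (by lia)
      have hh' : X ^ (n + 1) ∣ derivative h := Polynomial.X_pow_dvd_iff.mpr fun m hm => by
        rw [Polynomial.coeff_derivative, ih (m + 1) (by lia), zero_mul]
      obtain ⟨g, hg⟩ : X ^ n ∣ derivative (derivative h) :=
        Polynomial.X_pow_dvd_iff.mpr fun m hm => by
          rw [Polynomial.coeff_derivative, Polynomial.coeff_derivative, ih (m + 1 + 1) (by lia),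
            zero_mul, zero_mul]
      have hlead : a.coeff 0 * g.coeff 0 = 0 := by
        have := Polynomial.X_pow_dvd_iff.mp ((hh.mul_left b).add (hh'.mul_left c)) n n.lt_succ_self
        rwa [← heq, hg, mul_left_comm, Polynomial.coeff_X_pow_mul', if_pos le_rfl, Nat.sub_self,
          Polynomial.mul_coeff_zero] at this
      have hg0 : g.coeff 0 = h.coeff (n + 2) * ((n + 1 : ℕ) + 1 : ℕ) * ((n + 1 : ℕ) : D) := by
        have := congrArg (Polynomial.coeff · n) hg
        simp only [Polynomial.coeff_derivative, Polynomial.coeff_X_pow_mul', le_refl, if_true,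
          Nat.sub_self] at this
        rw [← this]
        push_cast
        rfl
      by_contra hne
      have hdeg := Polynomial.le_natDegree_of_ne_zero hne
      refine mul_ne_zero (mul_ne_zero hne ?_) ?_
        (hg0 ▸ (mul_eq_zero.mp hlead).resolve_left ha)
      · exact hcast _ (by lia) (by lia)
      · exact hcast _ (by lia) (by lia)

/-- Restricted to a line which is tangent at one point, `f` satisfies a linear differential equation
of second order, because `f ∣ tangentHessian i j f`. -/
theorem aeval_shearLine_eq_zero [Finite σ] [DecidableEq σ] [IsDomain D] {i j : σ}
    {f : MvPolynomial σ R} {b : D} {P : σ → D} (hf : f ∣ tangentHessian i j f)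
    (hcast : ∀ n : ℕ, 0 < n → n ≤ f.totalDegree → (n : D) ≠ 0)
    (hP : aeval P f = 0) (hi : aeval P (pderiv i f) ≠ 0)
    (hj : aeval P (pderiv j f) = b * aeval P (pderiv i f)) :
    aeval (shearLine i j b P) f = 0 := by
  set ℓ := shearLine i j b P
  have hℓ0 : (fun k => (ℓ k).coeff 0) = P := by ext k; simp [ℓ, shearLine]
  have hℓ (g : MvPolynomial σ R) : (aeval ℓ g).coeff 0 = aeval P g := by
    rw [aeval_comp_coeff_zero, hℓ0]
  obtain ⟨g, hg⟩ := hf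
  have hderiv₁ := derivative_aeval_shearLine i j b P f
  have hderiv₂ : derivative (derivative (aeval ℓ f)) = aeval ℓ (pderiv j (pderiv j f))
      - 2 * C b * aeval ℓ (pderiv i (pderiv j f)) + C b ^ 2 * aeval ℓ (pderiv i (pderiv i f)) := by
    simp only [hderiv₁, Polynomial.derivative_sub, Polynomial.derivative_mul,
      Polynomial.derivative_C, derivative_aeval_shearLine, pderiv_pderiv_comm j i, ℓ]
    ring
  refine eq_zero_of_mul_derivative_derivative_eq (a := aeval ℓ (pderiv i f) ^ 2) (b := aeval ℓ g)
    (c := 2 * aeval ℓ (pderiv i (pderiv j f)) * aeval ℓ (pderiv i f)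
      - aeval ℓ (pderiv i (pderiv i f)) *
        (derivative (aeval ℓ f) + 2 * C b * aeval ℓ (pderiv i f))) ?_
    (fun n hn hnf => hcast n hn
      (hnf.trans (natDegree_aeval_le (natDegree_shearLine_le i j b P) f))) ?_ ?_ ?_
  · rw [pow_two, Polynomial.mul_coeff_zero, hℓ]
    exact mul_ne_zero hi hi
  · have hg' := congrArg (aeval ℓ) hg
    simp only [tangentHessian, map_add, map_sub, map_mul, map_pow, map_ofNat] at hg'
    rw [mul_comm (aeval ℓ g), ← hg', hderiv₂, hderiv₁]
    ring
  · rw [hℓ, hP]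
  · have := Polynomial.coeff_derivative (aeval ℓ f) 0
    rw [hderiv₁, Polynomial.coeff_sub, Polynomial.coeff_C_mul, hℓ, hℓ, hj, sub_self] at this
    simpa using this.symm

end RuledSurfaces

section BilinearSurfaces

variable {F : Type*} [Field F]

theorem eq_of_eval_eq_zero_of_map_eq {D E : Type*} [CommRing D] [IsDomain D] [CommRing E]
    (ε : D →+* E) {q : D[X]} {x y : D} (hx : q.eval x = 0) (hy : q.eval y = 0)
    (hxy : ε x = ε y) (hq : ε ((derivative q).eval x) ≠ 0) : x = y := by
  obtain ⟨k, hk⟩ := Polynomial.binomExpansion q x (y - x)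
  rw [add_sub_cancel, hy, hx, zero_add, pow_two, ← mul_assoc, ← add_mul] at hk
  refine (sub_eq_zero.mp ((mul_eq_zero.mp hk.symm).resolve_left fun h => hq ?_)).symm
  simpa [hxy] using congrArg ε h

theorem eq_of_aeval_eq_zero {σ D E : Type*} [Finite σ] [CommRing D] [IsDomain D] [Algebra F D]
    [CommRing E] (ε : D →+* E) {f : MvPolynomial σ F} {i : σ} {P Q : σ → D} (hP : aeval P f = 0)
    (hQ : aeval Q f = 0) (hPQ : ∀ l ≠ i, P l = Q l) (hi : ε (P i) = ε (Q i))
    (hf : ε (aeval P (pderiv i f)) ≠ 0) : P i = Q i := by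
  classical
  cases nonempty_fintype σ
  set c : σ → D[X] := Function.update (fun l => C (P l)) i X
  have hc (g : MvPolynomial σ F) (x : D) :
      (aeval c g).eval x = aeval (Function.update P i x) g := by
    rw [← Polynomial.coe_aeval_eq_eval, ← AlgHom.restrictScalars_apply F,
      MvPolynomial.comp_aeval_apply]
    congr 2
    ext l
    by_cases hl : l = i <;> simp [c, hl]
  have hP' : Function.update P i (P i) = P := Function.update_eq_self i P
  have hQ' : Function.update P i (Q i) = Q := by
    ext l
    by_cases hl : l = i
    · subst hl; simp
    · simp [hl, hPQ l hl]
  refine eq_of_eval_eq_zero_of_map_eq ε (q := aeval c f) ?_ ?_ hi ?_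
  · rw [hc, hP', hP]
  · rw [hc, hQ', hQ]
  · rw [derivative_aeval, sum_eq_single i (fun l _ hl => by simp [c, hl]) (by simp)]
    simpa [c, hc, hP'] using hf

theorem exists_aeval_shearLine_shearLine_eq_zero {σ : Type*} [Finite σ] [DecidableEq σ]
    {i j k : σ} {f : MvPolynomial σ F} (hj : f ∣ tangentHessian i j f)
    (hk : f ∣ tangentHessian i k f)
    (hcast : ∀ n : ℕ, 0 < n → n ≤ f.totalDegree → (n : F) ≠ 0) {P : σ → F}
    (hP : aeval P f = 0) (hi : aeval P (pderiv i f) ≠ 0) :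
    ∃ a : F⟦X⟧, a.constantCoeff = aeval P (pderiv j f) / aeval P (pderiv i f) ∧
      aeval (shearLine i j a fun l =>
        (shearLine i k (aeval P (pderiv k f) / aeval P (pderiv i f)) P l : F⟦X⟧)) f = 0 := by
  set b := aeval P (pderiv k f) / aeval P (pderiv i f)
  set ℓ := shearLine i k b P
  have hℓ : aeval ℓ f = 0 :=
    aeval_shearLine_eq_zero hk hcast hP hi (div_mul_cancel₀ _ hi).symm
  have hmap (g : MvPolynomial σ F) : aeval (fun l => (ℓ l : F⟦X⟧)) g = (aeval ℓ g : F[X]) :=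
    (MvPolynomial.comp_aeval_apply ℓ (Polynomial.coeToPowerSeries.algHom F) g).symm
  have hconst (g : MvPolynomial σ F) :
      (aeval (fun l => (ℓ l : F⟦X⟧)) g).constantCoeff = aeval P g := by
    rw [hmap, Polynomial.constantCoeff_coe, aeval_comp_coeff_zero]
    simp [ℓ, shearLine]
  have hunit : (aeval (fun l => (ℓ l : F⟦X⟧)) (pderiv i f)).constantCoeff ≠ 0 := by
    rwa [hconst]
  refine ⟨aeval (fun l => (ℓ l : F⟦X⟧)) (pderiv j f) *
    (aeval (fun l => (ℓ l : F⟦X⟧)) (pderiv i f))⁻¹, ?_, ?_⟩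
  · rw [map_mul, PowerSeries.constantCoeff_inv, hconst, hconst, div_eq_mul_inv]
  · refine aeval_shearLine_eq_zero hj (fun n hn hnf h => hcast n hn hnf ?_) ?_ ?_ ?_
    · simpa using congrArg PowerSeries.constantCoeff h
    · rw [hmap, hℓ, Polynomial.coe_zero]
    · exact fun h => hunit (by rw [h, map_zero])
    · rw [mul_assoc, PowerSeries.inv_mul_cancel _ hunit, mul_one]

theorem map_shearLine {σ D E : Type*} [DecidableEq σ] [CommRing D] [CommRing E] (φ : D →+* E)
    (i j : σ) (b : D) (P : σ → D) (l : σ) :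
    (shearLine i j b P l).map φ = shearLine i j (φ b) (fun l => φ (P l)) l := by
  simp only [shearLine, Pi.sub_apply, Pi.smul_apply, Pi.single_apply, smul_eq_mul]
  split_ifs <;> simp

theorem coeff_eq_zero_of_add_mul_X_eq {a a' : F⟦X⟧} {b c : F}
    (h : PowerSeries.C (PowerSeries.C c) * PowerSeries.X
        + PowerSeries.map PowerSeries.C a * PowerSeries.C PowerSeries.X
      = PowerSeries.C (PowerSeries.C b * PowerSeries.X) + PowerSeries.C a' * PowerSeries.X)
    {n : ℕ} (hn : 2 ≤ n) : a.coeff n = 0 := by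
  have := congrArg (fun q : F⟦X⟧⟦X⟧ => (q.coeff n).coeff 1) h
  have h1 : n ≠ 1 := by lia
  have h0 : n ≠ 0 := by lia
  simpa [PowerSeries.coeff_X, PowerSeries.coeff_C, h0, h1] using this

theorem add_mul_X_eq_of_aeval_shearLine_eq_zero {σ : Type*} [Finite σ] [DecidableEq σ]
    {i j k : σ} (hij : i ≠ j) (hik : i ≠ k) (hjk : j ≠ k) {f : MvPolynomial σ F} {P : σ → F}
    (hi : aeval P (pderiv i f) ≠ 0) {a a' : F⟦X⟧} {b c : F}
    (ha : aeval (shearLine i j a fun l => (shearLine i k c P l : F⟦X⟧)) f = 0)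
    (ha' : aeval (shearLine i k a' fun l => (shearLine i j b P l : F⟦X⟧)) f = 0) :
    PowerSeries.C (PowerSeries.C c) * PowerSeries.X
        + PowerSeries.map PowerSeries.C a * PowerSeries.C PowerSeries.X
      = PowerSeries.C (PowerSeries.C b * PowerSeries.X) + PowerSeries.C a' * PowerSeries.X := by
  let φ : F⟦X⟧[X] →ₐ[F] F⟦X⟧⟦X⟧ :=
    { Polynomial.eval₂RingHom (PowerSeries.map PowerSeries.C) (PowerSeries.C PowerSeries.X) with
      commutes' := fun x => by simp [PowerSeries.algebraMap_apply, Polynomial.algebraMap_apply] }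
  let ψ : F⟦X⟧[X] →ₐ[F] F⟦X⟧⟦X⟧ :=
    { Polynomial.coeToPowerSeries.ringHom with
      commutes' := fun x => by simp [PowerSeries.algebraMap_apply, Polynomial.algebraMap_apply] }
  let ε : F⟦X⟧⟦X⟧ →ₐ[F] F :=
    { PowerSeries.constantCoeff.comp PowerSeries.constantCoeff with
      commutes' := fun x => by simp [PowerSeries.algebraMap_apply] }
  have hφ (p : F⟦X⟧[X]) : φ p = p.eval₂ (PowerSeries.map PowerSeries.C)
    (PowerSeries.C PowerSeries.X) := rfl
  have hψ (p : F⟦X⟧[X]) : ψ p = (p : F⟦X⟧⟦X⟧) := rfl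
  have hε (q : F⟦X⟧⟦X⟧) : ε q = q.constantCoeff.constantCoeff := rfl
  have hx := eq_of_aeval_eq_zero (ε : F⟦X⟧⟦X⟧ →+* F) (i := i)
    ((MvPolynomial.comp_aeval_apply _ φ f).symm.trans ((congrArg φ ha).trans (map_zero _)))
    ((MvPolynomial.comp_aeval_apply _ ψ f).symm.trans ((congrArg ψ ha').trans (map_zero _)))
    (fun l hl => ?_) ?_ ?_
  · have hx' : PowerSeries.C (PowerSeries.C (P i)) - PowerSeries.C (PowerSeries.C c) * PowerSeries.X
          - PowerSeries.map PowerSeries.C a * PowerSeries.C PowerSeries.X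
        = PowerSeries.C (PowerSeries.C (P i)) - PowerSeries.C (PowerSeries.C b * PowerSeries.X)
          - PowerSeries.C a' * PowerSeries.X := by
      simpa [hφ, hψ, shearLine, hij, hik, sub_eq_add_neg] using hx
    linear_combination -hx'
  · rcases eq_or_ne l j with rfl | hlj
    · simp [hφ, hψ, shearLine, hij.symm, hjk]
    rcases eq_or_ne l k with rfl | hlk
    · simp [hφ, hψ, shearLine, hik.symm, hjk.symm]
    · simp [hφ, hψ, shearLine, hl, hlj, hlk]
  · simp [hε, hφ, hψ, shearLine, hij, hik]
  · have hP : (fun l => ε (φ (shearLine i j a (fun l => (shearLine i k c P l : F⟦X⟧)) l))) = P := by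
      ext l
      simp [hφ, hε, shearLine]
    rw [RingHom.coe_coe, MvPolynomial.comp_aeval_apply, hP]
    exact hi

/-- Near `P` the equation `f = 0` determines the coordinate `i` as a power series in the coordinates
`j` and `k`. It is affine in each of them, which makes the slope `a` an affine function. -/
theorem exists_aeval_shearLine_coe_eq_zero {σ : Type*} [Finite σ] [DecidableEq σ]
    {i j k : σ} (hij : i ≠ j) (hik : i ≠ k) (hjk : j ≠ k) {f : MvPolynomial σ F}
    (hj : f ∣ tangentHessian i j f) (hk : f ∣ tangentHessian i k f)
    (hcast : ∀ n : ℕ, 0 < n → n ≤ f.totalDegree → (n : F) ≠ 0) {P : σ → F}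
    (hP : aeval P f = 0) (hi : aeval P (pderiv i f) ≠ 0) :
    ∃ b c e : F, aeval (shearLine i j ((C b + C e * X : F[X]) : F⟦X⟧)
      fun l => (shearLine i k c P l : F⟦X⟧)) f = 0 := by
  obtain ⟨a, ha, hfa⟩ := exists_aeval_shearLine_shearLine_eq_zero hj hk hcast hP hi
  obtain ⟨a', -, hfa'⟩ := exists_aeval_shearLine_shearLine_eq_zero hk hj hcast hP hi
  set b := aeval P (pderiv j f) / aeval P (pderiv i f)
  set c := aeval P (pderiv k f) / aeval P (pderiv i f)
  have ha_coeff {n : ℕ} : 2 ≤ n → a.coeff n = 0 :=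
    coeff_eq_zero_of_add_mul_X_eq
      (add_mul_X_eq_of_aeval_shearLine_eq_zero hij hik hjk hi hfa hfa')
  have ha_eq : a = ((C b + C (a.coeff 1) * X : F[X]) : F⟦X⟧) := by
    ext (_ | _ | n) <;> simp [ha, ha_coeff]
  exact ⟨b, c, a.coeff 1, ha_eq ▸ hfa⟩

theorem exists_aeval_shearLine_polynomial_eq_zero {σ : Type*} [Finite σ] [DecidableEq σ]
    {i j k : σ} (hij : i ≠ j) (hik : i ≠ k) (hjk : j ≠ k) {f : MvPolynomial σ F}
    (hj : f ∣ tangentHessian i j f) (hk : f ∣ tangentHessian i k f)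
    (hcast : ∀ n : ℕ, 0 < n → n ≤ f.totalDegree → (n : F) ≠ 0) {P : σ → F}
    (hP : aeval P f = 0) (hi : aeval P (pderiv i f) ≠ 0) :
    ∃ b c e : F, aeval (shearLine i j (C b + C e * X) (shearLine i k c P)) f = 0 := by
  obtain ⟨b, c, e, hf⟩ := exists_aeval_shearLine_coe_eq_zero hij hik hjk hj hk hcast hP hi
  refine ⟨b, c, e, ?_⟩
  let κ : F[X][X] →ₐ[F] F⟦X⟧[X] :=
    { Polynomial.mapRingHom Polynomial.coeToPowerSeries.ringHom with
      commutes' := fun x => by simp [Polynomial.algebraMap_apply] }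
  have hκ : Function.Injective κ := Polynomial.map_injective _ (Polynomial.coe_injective F)
  have hcurve (l : σ) : κ (shearLine i j (C b + C e * X) (shearLine i k c P) l)
      = shearLine i j ((C b + C e * X : F[X]) : F⟦X⟧)
        (fun l => (shearLine i k c P l : F⟦X⟧)) l :=
    map_shearLine (Polynomial.coeToPowerSeries.ringHom : F[X] →+* F⟦X⟧) i j _ _ l
  refine hκ ?_
  rw [MvPolynomial.comp_aeval_apply, map_zero, funext hcurve, hf]

/-- The bilinear surface `x = ε y z + β y + γ z + δ`, which contains lines in infinitely many
directions. -/
noncomputable def bilinearSurface (ε β γ δ : F) : MvPolynomial (Fin 3) F :=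
  MvPolynomial.X 0 - (MvPolynomial.C ε * MvPolynomial.X 1 * MvPolynomial.X 2
    + MvPolynomial.C β * MvPolynomial.X 1 + MvPolynomial.C γ * MvPolynomial.X 2
    + MvPolynomial.C δ)

theorem X_sub_dvd_of_aeval_update_eq_zero {σ : Type*} [DecidableEq σ] (i : σ)
    {f g : MvPolynomial σ F} (h : aeval (Function.update MvPolynomial.X i g) f = 0) :
    MvPolynomial.X i - g ∣ f := by
  set I := Ideal.span {MvPolynomial.X i - g}
  rw [← Ideal.mem_span_singleton, ← Ideal.Quotient.eq_zero_iff_mem]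
  have hX : (fun l => Ideal.Quotient.mkₐ F I (Function.update MvPolynomial.X i g l))
      = fun l => Ideal.Quotient.mkₐ F I (MvPolynomial.X l) := by
    ext l
    rcases eq_or_ne l i with rfl | hl
    · simpa using ((Ideal.Quotient.eq).mpr (Ideal.mem_span_singleton_self _)).symm
    · simp [hl]
  calc Ideal.Quotient.mkₐ F I f
      = Ideal.Quotient.mkₐ F I (aeval MvPolynomial.X f) := by
        rw [MvPolynomial.aeval_X_left_apply]
    _ = Ideal.Quotient.mkₐ F I (aeval (Function.update MvPolynomial.X i g) f) := by
        rw [MvPolynomial.comp_aeval_apply, MvPolynomial.comp_aeval_apply, hX]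
    _ = 0 := by rw [h, map_zero]

theorem exists_dvd_bilinearSurface {f : MvPolynomial (Fin 3) F} (hf : Irreducible f)
    (hcast : ∀ n : ℕ, 0 < n → n ≤ f.totalDegree → (n : F) ≠ 0)
    (h1 : f ∣ tangentHessian 0 1 f) (h2 : f ∣ tangentHessian 0 2 f) {P : Fin 3 → F}
    (hP : aeval P f = 0) (h0 : aeval P (pderiv 0 f) ≠ 0) :
    ∃ ε β γ δ : F, f ∣ bilinearSurface ε β γ δ := by
  obtain ⟨b, c, e, hline⟩ := exists_aeval_shearLine_polynomial_eq_zero (by decide) (by decide)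
    (by decide) h1 h2 hcast hP h0
  let ψ : F[X][X] →ₐ[F] MvPolynomial (Fin 3) F := Polynomial.eval₂AlgHom
    (Polynomial.aeval (MvPolynomial.X 2 - MvPolynomial.C (P 2)))
    (MvPolynomial.X 1 - MvPolynomial.C (P 1)) fun _ => Commute.all _ _
  refine ⟨-e, e * P 2 - b, e * P 1 - c, P 0 + b * P 1 + c * P 2 - e * P 1 * P 2, ?_⟩
  have hdvd : bilinearSurface (-e) (e * P 2 - b) (e * P 1 - c)
      (P 0 + b * P 1 + c * P 2 - e * P 1 * P 2) ∣ f := by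
    refine X_sub_dvd_of_aeval_update_eq_zero 0 ?_
    rw [← map_zero ψ, ← hline, MvPolynomial.comp_aeval_apply]
    congr 2
    ext1 l
    fin_cases l
    · simp [ψ, shearLine]
      ring
    · simp [ψ, shearLine]
    · simp [ψ, shearLine]
  have hzero : aeval P (bilinearSurface (-e) (e * P 2 - b) (e * P 1 - c)
      (P 0 + b * P 1 + c * P 2 - e * P 1 * P 2)) = 0 := by
    simp only [bilinearSurface, map_add, map_sub, map_mul, MvPolynomial.aeval_X,
      MvPolynomial.aeval_C, Algebra.algebraMap_self, RingHom.id_apply]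
    ring
  exact ((hf.dvd_iff.mp hdvd).resolve_left fun hunit =>
    not_isUnit_zero (hzero ▸ hunit.map (aeval P))).dvd

end BilinearSurfaces

section Elimination

theorem resultant_ne_zero_of_not_dvd {R : Type*} [CommRing R] [IsDomain R]
    [UniqueFactorizationMonoid R] {p q : R[X]} (hp : Irreducible p) (hdeg : p.natDegree ≠ 0)
    (hpq : ¬ p ∣ q) : p.resultant q ≠ 0 := by
  intro hres
  set K := FractionRing R
  have hinj : Function.Injective (algebraMap R K) := IsFractionRing.injective R K
  have hres' : (p.map (algebraMap R K)).resultant (q.map (algebraMap R K)) = 0 := by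
    rw [Polynomial.natDegree_map_eq_of_injective hinj,
      Polynomial.natDegree_map_eq_of_injective hinj, Polynomial.resultant_map_map, hres, map_zero]
  have hp' : Irreducible (p.map (algebraMap R K)) :=
    ((hp.isPrimitive hdeg).irreducible_iff_irreducible_map_fraction_map (K := K)).mp hp
  obtain ⟨s, hs⟩ : p.map (algebraMap R K) ∣ q.map (algebraMap R K) := by
    rw [Polynomial.resultant_eq_zero_iff, hp'.coprime_iff_not_dvd, not_not] at hres'
    exact hres'.2
  obtain ⟨b, hb, hbs⟩ := IsLocalization.integerNormalization_spec (nonZeroDivisors R) s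
  have hdvd : p ∣ C b * q := by
    refine ⟨IsLocalization.integerNormalization (nonZeroDivisors R) s,
      Polynomial.map_injective _ hinj ?_⟩
    rw [Polynomial.map_mul, Polynomial.map_mul, hs, hbs, Polynomial.map_C, Algebra.smul_def,
      Polynomial.algebraMap_apply]
    ring
  refine (hp.prime.dvd_or_dvd hdvd).elim (fun hpb => hdeg ?_) hpq
  have := Polynomial.natDegree_le_of_dvd hpb (by simpa using nonZeroDivisors.ne_zero hb)
  simpa using this

theorem totalDegree_resultant_le {σ R : Type*} [CommRing R] {p q : (MvPolynomial σ R)[X]}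
    {a b : ℕ} (hp : ∀ i, (p.coeff i).totalDegree ≤ a) (hq : ∀ i, (q.coeff i).totalDegree ≤ b) :
    (p.resultant q).totalDegree ≤ p.natDegree * b + q.natDegree * a := by
  rw [Polynomial.resultant, Matrix.det_apply]
  refine MvPolynomial.totalDegree_finsetSum_le fun τ _ => ?_
  have hentry_left (i : Fin p.natDegree) (j) : (Polynomial.sylvester p q p.natDegree q.natDegree j
      (i.castAdd q.natDegree)).totalDegree ≤ b := by
    simp only [Polynomial.sylvester, Matrix.of_apply, Fin.addCases_left]
    split_ifs
    · exact hq _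
    · simp
  have hentry_right (i : Fin q.natDegree) (j) : (Polynomial.sylvester p q p.natDegree q.natDegree j
      (i.natAdd p.natDegree)).totalDegree ≤ a := by
    simp only [Polynomial.sylvester, Matrix.of_apply, Fin.addCases_right]
    split_ifs
    · exact hp _
    · simp
  calc (Equiv.Perm.sign τ •
          ∏ i, Polynomial.sylvester p q p.natDegree q.natDegree (τ i) i).totalDegree
      = (∏ i, Polynomial.sylvester p q p.natDegree q.natDegree (τ i) i).totalDegree := by
        rcases Int.units_eq_one_or (Equiv.Perm.sign τ) with h | h <;> simp [h]
    _ ≤ ∑ i, (Polynomial.sylvester p q p.natDegree q.natDegree (τ i) i).totalDegree :=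
        MvPolynomial.totalDegree_finsetProd _ _
    _ ≤ ∑ _i : Fin p.natDegree, b + ∑ _i : Fin q.natDegree, a := by
        rw [Fin.sum_univ_add]
        exact add_le_add (sum_le_sum fun i _ => hentry_left i _)
          (sum_le_sum fun i _ => hentry_right i _)
    _ = p.natDegree * b + q.natDegree * a := by simp

theorem totalDegree_coeff_finSuccEquiv_le {R : Type*} [CommRing R] {n : ℕ}
    (f : MvPolynomial (Fin (n + 1)) R) (i : ℕ) :
    ((MvPolynomial.finSuccEquiv R n f).coeff i).totalDegree ≤ f.totalDegree := by
  by_cases h : (MvPolynomial.finSuccEquiv R n f).coeff i = 0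
  · simp [h]
  · exact (Nat.le_add_right _ _).trans (MvPolynomial.totalDegree_coeff_finSuccEquiv_add_le f i h)

theorem natDegree_finSuccEquiv_le {R : Type*} [CommRing R] {n : ℕ}
    (f : MvPolynomial (Fin (n + 1)) R) :
    (MvPolynomial.finSuccEquiv R n f).natDegree ≤ f.totalDegree :=
  (MvPolynomial.natDegree_finSuccEquiv f).trans_le (MvPolynomial.degreeOf_le_totalDegree _ _)

variable {F : Type*} [Field F]

theorem finSuccEquiv_rename_succ {R : Type*} [CommRing R] {n : ℕ} (r : MvPolynomial (Fin n) R) :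
    MvPolynomial.finSuccEquiv R n (MvPolynomial.rename Fin.succ r) = C r := by
  induction r using MvPolynomial.induction_on with
  | C a => simp [MvPolynomial.finSuccEquiv_apply]
  | add p q hp hq => simp only [map_add, hp, hq]
  | mul_X p i hp =>
    simp only [map_mul, hp, MvPolynomial.rename_X, MvPolynomial.finSuccEquiv_X_succ]

theorem exists_rename_succ_mem_span_pair {n : ℕ} {f g : MvPolynomial (Fin (n + 1)) F}
    (hf : Irreducible f) (hfg : ¬ f ∣ g) :
    ∃ r : MvPolynomial (Fin n) F, r ≠ 0 ∧ r.totalDegree ≤ 2 * f.totalDegree * g.totalDegree ∧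
      MvPolynomial.rename Fin.succ r ∈ Ideal.span {f, g} := by
  set Φ := MvPolynomial.finSuccEquiv F n
  have hmem {r : MvPolynomial (Fin n) F} (h : C r ∈ Ideal.span {Φ f, Φ g}) :
      MvPolynomial.rename Fin.succ r ∈ Ideal.span {f, g} := by
    obtain ⟨a, b, hab⟩ := Ideal.mem_span_pair.mp h
    refine Ideal.mem_span_pair.mpr ⟨Φ.symm a, Φ.symm b, Φ.injective ?_⟩
    simpa [Φ, finSuccEquiv_rename_succ] using hab
  rcases Nat.eq_zero_or_pos g.totalDegree with hg | hg
  · rw [MvPolynomial.totalDegree_eq_zero_iff_eq_C] at hg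
    refine ⟨MvPolynomial.C (g.coeff 0), fun h => hfg ?_, by simp, ?_⟩
    · rw [hg, (map_eq_zero_iff _ (MvPolynomial.C_injective _ _)).mp h, map_zero]
      exact dvd_zero f
    · rw [MvPolynomial.rename_C, ← hg]
      exact Ideal.subset_span (by simp)
  have hΦf : Irreducible (Φ f) := (MulEquiv.irreducible_iff Φ).mpr hf
  by_cases hdeg : (Φ f).natDegree = 0
  · have hconst := Polynomial.eq_C_of_natDegree_eq_zero hdeg
    refine ⟨(Φ f).coeff 0, fun h => hΦf.ne_zero (by rw [hconst, h, map_zero]),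
      (totalDegree_coeff_finSuccEquiv_le f 0).trans (by nlinarith), hmem ?_⟩
    rw [← hconst]
    exact Ideal.subset_span (by simp)
  · obtain ⟨a, b, -, -, hab⟩ := Polynomial.exists_mul_add_mul_eq_C_resultant (Φ f) (Φ g)
      le_rfl le_rfl (Or.inl hdeg)
    refine ⟨(Φ f).resultant (Φ g), resultant_ne_zero_of_not_dvd hΦf hdeg
      fun h => hfg ((map_dvd_iff Φ).mp h), ?_, hmem (Ideal.mem_span_pair.mpr ⟨a, b, ?_⟩)⟩
    · have hf' := natDegree_finSuccEquiv_le f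
      have hg' := natDegree_finSuccEquiv_le g
      refine (totalDegree_resultant_le (totalDegree_coeff_finSuccEquiv_le f)
        (totalDegree_coeff_finSuccEquiv_le g)).trans ?_
      nlinarith
    · rw [← hab]
      ring

end Elimination

section CoordinateLines

variable {F : Type*} [Field F]

/-- The line `y = l.1 * x + l.2.1`, `z = l.2.2`, parametrised by `x`. -/
noncomputable def xyLine (l : F × F × F) : Fin 3 → F[X] :=
  ![X, C l.1 * X + C l.2.1, C l.2.2]

/-- The line `y = l.1`, `z = l.2.1 * x + l.2.2`, parametrised by `x`. -/
noncomputable def xzLine (l : F × F × F) : Fin 3 → F[X] :=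
  ![X, C l.1, C l.2.1 * X + C l.2.2]

theorem natDegree_xyLine_le (l : F × F × F) (i : Fin 3) : (xyLine l i).natDegree ≤ 1 := by
  fin_cases i
  · simp [xyLine]
  · simpa [xyLine] using Polynomial.natDegree_linear_le (a := l.1) (b := l.2.1)
  · simp [xyLine]

theorem natDegree_xzLine_le (l : F × F × F) (i : Fin 3) : (xzLine l i).natDegree ≤ 1 := by
  fin_cases i
  · simp [xzLine]
  · simp [xzLine]
  · simpa [xzLine] using Polynomial.natDegree_linear_le (a := l.2.1) (b := l.2.2)

theorem eval_aeval {σ : Type*} (c : σ → F[X]) (f : MvPolynomial σ F) (t : F) :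
    (aeval c f).eval t = aeval (fun i => (c i).eval t) f := by
  simpa [Polynomial.coe_aeval_eq_eval] using
    MvPolynomial.comp_aeval_apply c (Polynomial.aeval t : F[X] →ₐ[F] F) f

theorem card_le_totalDegree_of_aeval_eq_zero {r : MvPolynomial (Fin 2) F} (hr : r ≠ 0)
    {Y : Finset F}
    (hY : ∀ y ∈ Y, ∃ m n : F, m ≠ 0 ∧ aeval ![C y, C m * X + C n] r = 0) :
    #Y ≤ r.totalDegree := by
  set Φ := MvPolynomial.finSuccEquiv F 1
  have hX : MvPolynomial.finSuccEquiv F 1 (MvPolynomial.X 1) = C (MvPolynomial.X 0) :=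
    MvPolynomial.finSuccEquiv_X_succ (j := 0)
  have hΦ (y : F) : (Φ r).eval (MvPolynomial.C y) =
      aeval ![MvPolynomial.C y, MvPolynomial.X (0 : Fin 1)] r := by
    have : ((Polynomial.aeval (MvPolynomial.C y)).restrictScalars F).comp Φ.toAlgHom =
        aeval ![MvPolynomial.C y, MvPolynomial.X (0 : Fin 1)] :=
      MvPolynomial.algHom_ext <| Fin.forall_fin_two.mpr
        ⟨by simp [Φ, MvPolynomial.finSuccEquiv_X_zero], by simp [Φ, hX]⟩
    simpa [Polynomial.coe_aeval_eq_eval] using DFunLike.congr_fun this r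
  have hroot : ∀ y ∈ Y, (Φ r).IsRoot (MvPolynomial.C y) := by
    intro y hy
    obtain ⟨m, n, hm, h⟩ := hY y hy
    have h' := congrArg (Polynomial.aeval
      (MvPolynomial.C m⁻¹ * (MvPolynomial.X (0 : Fin 1) - MvPolynomial.C n))) h
    rw [MvPolynomial.comp_aeval_apply, map_zero] at h'
    rw [Polynomial.IsRoot, hΦ, ← h']
    congr 2
    refine funext (Fin.forall_fin_two.mpr ⟨by simp, ?_⟩)
    simp [MvPolynomial.algebraMap_eq, ← mul_assoc, ← MvPolynomial.C_mul, hm]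
  have hΦr : Φ r ≠ 0 := (map_ne_zero_iff Φ Φ.injective).mpr hr
  classical
  calc #Y = #(Y.image (MvPolynomial.C : F → MvPolynomial (Fin 1) F)) :=
        (card_image_of_injective _ (MvPolynomial.C_injective _ _)).symm
    _ ≤ (Φ r).natDegree := Polynomial.card_le_degree_of_subset_roots fun x hx => by
        obtain ⟨y, hy, rfl⟩ := mem_image.mp (mem_val.mp hx)
        exact (Polynomial.mem_roots hΦr).mpr (hroot y hy)
    _ ≤ r.totalDegree := natDegree_finSuccEquiv_le r

theorem card_xzLine_le_of_not_dvd {f g : MvPolynomial (Fin 3) F} (hf : Irreducible f)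
    (hfg : ¬ f ∣ g) {T : Finset (F × F × F)} (hinj : Set.InjOn Prod.fst (T : Set (F × F × F)))
    (hslope : ∀ l ∈ T, l.2.1 ≠ 0) (hTf : ∀ l ∈ T, aeval (xzLine l) f = 0)
    (hTg : ∀ l ∈ T, aeval (xzLine l) g = 0) :
    #T ≤ 2 * f.totalDegree * g.totalDegree := by
  classical
  obtain ⟨r, hr, hrdeg, hrmem⟩ := exists_rename_succ_mem_span_pair hf hfg
  obtain ⟨a, b, hab⟩ := Ideal.mem_span_pair.mp hrmem
  rw [← card_image_of_injOn hinj]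
  refine (card_le_totalDegree_of_aeval_eq_zero hr fun y hy => ?_).trans hrdeg
  obtain ⟨l, hl, rfl⟩ := mem_image.mp hy
  refine ⟨l.2.1, l.2.2, hslope l hl, ?_⟩
  have hl' : aeval (xzLine l) (MvPolynomial.rename Fin.succ r) = 0 := by
    rw [← hab, map_add, map_mul, map_mul, hTf l hl, hTg l hl, mul_zero, mul_zero, add_zero]
  rwa [MvPolynomial.aeval_rename] at hl'

end CoordinateLines

section Interpolation

variable {σ ι F : Type*} [Field F]

theorem exists_aeval_eq_zero_of_mul_lt_card {s : Finset ι} {c : ι → σ → F[X]}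
    (hc : ∀ i ∈ s, ∀ j, (c i j).natDegree ≤ 1) {D : ℕ} {S : Finset (σ →₀ ℕ)}
    (hS : ∀ e ∈ S, e.degree ≤ D) (hcard : #s * (D + 1) < #S) :
    ∃ h : MvPolynomial σ F, h ≠ 0 ∧ h.totalDegree ≤ D ∧ ∀ i ∈ s, aeval (c i) h = 0 := by
  let V := MvPolynomial.restrictSupport F (S : Set (σ →₀ ℕ))
  have hV : Module.finrank F V = #S := by
    rw [Module.finrank_eq_card_basis (MvPolynomial.basisRestrictSupport F (S : Set (σ →₀ ℕ)))]
    simp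
  have : FiniteDimensional F V :=
    (MvPolynomial.basisRestrictSupport F (S : Set (σ →₀ ℕ))).finiteDimensional_of_finite
  let L : V →ₗ[F] (s × Fin (D + 1) → F) := LinearMap.pi fun x =>
    (Polynomial.lcoeff F x.2) ∘ₗ (aeval (c x.1)).toLinearMap ∘ₗ V.subtype
  have hker : LinearMap.ker L ≠ ⊥ := by
    refine LinearMap.ker_ne_bot_of_finrank_lt ?_
    simpa [hV] using hcard
  obtain ⟨⟨h, hhV⟩, hhL, hh0⟩ := (Submodule.ne_bot_iff _).mp hker
  have hdeg : h.totalDegree ≤ D :=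
    Finset.sup_le fun e he => hS e (hhV he)
  refine ⟨h, fun h0 => hh0 (Subtype.ext h0), hdeg, fun i hi => ?_⟩
  ext n
  rcases le_or_gt n D with hn | hn
  · exact congrFun (LinearMap.mem_ker.mp hhL) (⟨i, hi⟩, ⟨n, Nat.lt_succ_of_le hn⟩)
  · exact Polynomial.coeff_eq_zero_of_natDegree_lt
      (((natDegree_aeval_le (hc i hi) h).trans hdeg).trans_lt hn)

theorem exists_aeval_eq_zero_of_mul_lt_pow [Fintype σ] {s : Finset ι} {c : ι → σ → F[X]}
    (hc : ∀ i ∈ s, ∀ j, (c i j).natDegree ≤ 1) {d : ℕ}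
    (hcard : #s * (Fintype.card σ * d + 1) < (d + 1) ^ Fintype.card σ) :
    ∃ h : MvPolynomial σ F, h ≠ 0 ∧ h.totalDegree ≤ Fintype.card σ * d ∧
      ∀ i ∈ s, aeval (c i) h = 0 := by
  classical
  let E : Finset (σ →₀ ℕ) := Iic (Finsupp.equivFunOnFinite.symm fun _ => d)
  refine exists_aeval_eq_zero_of_mul_lt_card hc (S := E) (fun e he => ?_) ?_
  · rw [Finsupp.degree_eq_sum]
    simpa using sum_le_card_nsmul univ e d fun i _ => mem_Iic.mp he i
  · have : #E = (d + 1) ^ Fintype.card σ := by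
      rw [Finsupp.card_Iic, prod_subset (subset_univ _) fun i _ hi => by
        simp [Finsupp.notMem_support_iff.mp hi]]
      simp
    rwa [this]

end Interpolation

section Sampling

variable {α κ : Type*} [DecidableEq α]

theorem card_inter_insert {N B : Finset α} {x : α} (hx : x ∉ B) :
    #(N ∩ insert x B) = #(N ∩ B) + if x ∈ N then 1 else 0 := by
  split_ifs with h
  · rw [inter_insert_of_mem h, card_insert_of_notMem fun h' => hx (mem_inter.mp h').2]
  · rw [inter_insert_of_notMem h, add_zero]

/-- Method of conditional expectations for the random subset of `S` that contains each element with
probability `1 / q`: the left-hand side is at most its mean, in which `1 - 1 / (2 * q)` is the mean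
of the factor `1 / 2` or `1` that an element of `N j` contributes. -/
theorem exists_subset_sum_mul_two_pow_le (J : Finset κ) (N : κ → Finset α) (S : Finset α) {q : ℝ}
    (hq : 1 ≤ q) (w : κ → ℝ) (β : ℝ) :
    ∃ B ⊆ S, ∑ j ∈ J, w j * (1 / 2) ^ #(N j ∩ B) + β * #B ≤
      ∑ j ∈ J, w j * (1 - 1 / (2 * q)) ^ #(N j ∩ S) + β * #S / q := by
  have hq0 : 0 < q := one_pos.trans_le hq
  induction S using Finset.induction_on generalizing w with
  | empty => exact ⟨∅, by simp⟩
  | insert x S hx ih =>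
    obtain ⟨B, hBS, hB⟩ := ih fun j => w j * (1 - 1 / (2 * q)) ^ if x ∈ N j then 1 else 0
    let L (B : Finset α) : ℝ := ∑ j ∈ J, w j * (1 / 2) ^ #(N j ∩ B) + β * #B
    have hxB : x ∉ B := fun h => hx (hBS h)
    have hmean : (1 - 1 / q) * L B + 1 / q * L (insert x B) ≤
        ∑ j ∈ J, w j * (1 - 1 / (2 * q)) ^ #(N j ∩ insert x S) + β * #(insert x S) / q := by
      calc (1 - 1 / q) * L B + 1 / q * L (insert x B)
          = ∑ j ∈ J, (w j * (1 - 1 / (2 * q)) ^ if x ∈ N j then 1 else 0) *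
              (1 / 2) ^ #(N j ∩ B) + β * #B + β / q := by
            simp only [L, mul_add, mul_sum, card_insert_of_notMem hxB, card_inter_insert hxB]
            rw [add_add_add_comm, ← sum_add_distrib, add_assoc]
            refine congrArg₂ _ (sum_congr rfl fun j _ => ?_) ?_
            · split_ifs <;> field_simp <;> ring
            · push_cast
              ring
        _ ≤ _ := by
            simp only [mul_assoc, ← pow_add] at hB ⊢
            simp only [card_insert_of_notMem hx, card_inter_insert hx, add_comm #(_ ∩ S)]
            push_cast
            linear_combination hB
    have hq1 : 1 / q ≤ 1 := (div_le_one hq0).mpr hq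
    rcases le_total (L B) (L (insert x B)) with h | h
    · refine ⟨B, hBS.trans (subset_insert x S), le_trans ?_ hmean⟩
      linear_combination 1 / q * h
    · refine ⟨insert x B, insert_subset_insert x hBS, le_trans ?_ hmean⟩
      linear_combination (1 - 1 / q) * h

theorem one_sub_pow_le_half_pow {q s n : ℕ} (hq : 0 < q) (hn : 2 * q * s ≤ n) :
    (1 - 1 / (2 * (q : ℝ))) ^ n ≤ (1 / 2) ^ s := by
  have hq' : (1 : ℝ) ≤ q := by exact_mod_cast hq
  have hbase : 0 ≤ 1 - 1 / (2 * (q : ℝ)) := by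
    rw [sub_nonneg, div_le_one (by positivity)]
    linarith
  have hhalf : (1 - 1 / (2 * (q : ℝ))) ^ (2 * q) ≤ 1 / 2 := by
    have h2q : (1 : ℝ) ≤ (2 * q : ℕ) := by exact_mod_cast Nat.one_le_iff_ne_zero.mpr (by positivity)
    calc (1 - 1 / (2 * (q : ℝ))) ^ (2 * q) ≤ Real.exp (-1) := by
          simpa using Real.one_sub_div_pow_le_exp_neg h2q
      _ ≤ 1 / 2 := by
          rw [Real.exp_neg, one_div]
          exact inv_anti₀ two_pos Real.exp_one_gt_two.le
  calc (1 - 1 / (2 * (q : ℝ))) ^ n ≤ (1 - 1 / (2 * (q : ℝ))) ^ (2 * q * s) :=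
        pow_le_pow_of_le_one hbase (sub_le_self _ (by positivity)) hn
    _ = ((1 - 1 / (2 * (q : ℝ))) ^ (2 * q)) ^ s := pow_mul _ _ _
    _ ≤ (1 / 2) ^ s := pow_le_pow_left₀ (pow_nonneg hbase _) hhalf _

theorem exists_subset_sum_half_pow_le (J : Finset κ) (N : κ → Finset α) {S : Finset α}
    {m q s : ℕ} (hm : 0 < m) (hS : #S ≤ m) (hq : 0 < q) (hN : ∀ j ∈ J, N j ⊆ S)
    (hcard : ∀ j ∈ J, 2 * q * (s + 3) ≤ #(N j)) :
    ∃ B ⊆ S, ∑ j ∈ J, (1 / 2 : ℝ) ^ #(N j ∩ B) + #J * (1 / 2) ^ s * q / (8 * m) * #B ≤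
      #J * (1 / 2) ^ s / 4 := by
  have : (0 : ℝ) < m := by exact_mod_cast hm
  have hq' : (1 : ℝ) ≤ q := by exact_mod_cast hq
  set c : ℝ := (1 / 2) ^ s with hc
  obtain ⟨B, hBS, hB⟩ := exists_subset_sum_mul_two_pow_le J N S hq' 1 (#J * c * q / (8 * m))
  refine ⟨B, hBS, ?_⟩
  simp only [Pi.one_apply, one_mul] at hB
  refine hB.trans ?_
  have h1 : ∑ j ∈ J, (1 - 1 / (2 * (q : ℝ))) ^ #(N j ∩ S) ≤ #J * (c / 8) := by
    rw [← nsmul_eq_mul]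
    refine sum_le_card_nsmul _ _ _ fun j hj => ?_
    rw [inter_eq_left.mpr (hN j hj)]
    refine (one_sub_pow_le_half_pow hq (hcard j hj)).trans_eq ?_
    rw [pow_add, ← hc]
    ring
  have h2 : (#J * c * q / (8 * m) * #S / q : ℝ) ≤ #J * c / 8 := by
    have : (#S : ℝ) ≤ m := by exact_mod_cast hS
    rw [div_mul_eq_mul_div, div_div, div_le_div_iff₀ (by positivity) (by positivity)]
    have : 0 ≤ #J * c * q * 8 := by positivity
    nlinarith
  linarith

theorem exists_subset_card_le_two_mul_card_filter (J : Finset κ) (N : κ → Finset α)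
    {S : Finset α} {m q s : ℕ} (hm : 0 < m) (hS : #S ≤ m) (hq : 0 < q) (hN : ∀ j ∈ J, N j ⊆ S)
    (hcard : ∀ j ∈ J, 2 * q * (s + 3) ≤ #(N j)) :
    ∃ B ⊆ S, q * #B ≤ 2 * m ∧ #J ≤ 2 * #{j ∈ J | s < #(N j ∩ B)} := by
  rcases J.eq_empty_or_nonempty with rfl | hJ
  · exact ⟨∅, by simp⟩
  have : (0 : ℝ) < #J := by exact_mod_cast hJ.card_pos
  have : (0 : ℝ) < m := by exact_mod_cast hm
  obtain ⟨B, hBS, hmean⟩ := exists_subset_sum_half_pow_le J N hm hS hq hN hcard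
  set c : ℝ := (1 / 2) ^ s
  have hc0 : 0 < c := by positivity
  have hfew : #{j ∈ J | ¬ s < #(N j ∩ B)} * c ≤ #J * c / 4 := by
    calc (#{j ∈ J | ¬ s < #(N j ∩ B)} * c : ℝ)
        ≤ ∑ j ∈ J with ¬ s < #(N j ∩ B), (1 / 2) ^ #(N j ∩ B) := by
          rw [← nsmul_eq_mul]
          refine card_nsmul_le_sum _ _ _ fun j hj => ?_
          exact pow_le_pow_of_le_one (by norm_num) (by norm_num) (not_lt.mp (mem_filter.mp hj).2)
      _ ≤ ∑ j ∈ J, (1 / 2) ^ #(N j ∩ B) :=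
          sum_le_sum_of_subset_of_nonneg (filter_subset _ _) fun _ _ _ => by positivity
      _ ≤ #J * c / 4 := (le_add_of_nonneg_right (by positivity)).trans hmean
  have hsmall : #J * c * q / (8 * m) * #B ≤ #J * c / 4 :=
    (le_add_of_nonneg_left (sum_nonneg fun _ _ => by positivity)).trans hmean
  refine ⟨B, hBS, ?_, ?_⟩
  · have hJc : 0 < #J * c := by positivity
    have : (q * #B : ℝ) ≤ 2 * m := by
      rw [div_mul_eq_mul_div, div_le_div_iff₀ (by positivity) (by positivity)] at hsmall
      nlinarith
    exact_mod_cast this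
  · have : (#{j ∈ J | ¬ s < #(N j ∩ B)} : ℝ) * 4 ≤ #J := by nlinarith
    have : #{j ∈ J | ¬ s < #(N j ∩ B)} * 4 ≤ #J := by exact_mod_cast this
    have := card_filter_add_card_filter_not (s := J) fun j => s < #(N j ∩ B)
    omega

end Sampling

section TangentHessian

variable {σ R D : Type*} [CommRing R] [CommRing D] [Algebra R D]

theorem aeval_tangentHessian_eq_zero [Finite σ] [DecidableEq σ] {i j : σ} {c : σ → D[X]} {a : D}
    (hc : ∀ k, derivative (c k) = (if k = i then 1 else 0) + if k = j then C a else 0)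
    {f : MvPolynomial σ R} (hf : aeval c f = 0) : aeval c (tangentHessian i j f) = 0 := by
  cases nonempty_fintype σ
  have hderiv (g : MvPolynomial σ R) : derivative (aeval c g) =
      aeval c (pderiv i g) + C a * aeval c (pderiv j g) := by
    simp only [derivative_aeval, hc, mul_add, sum_add_distrib, mul_ite, mul_one, mul_zero,
      sum_ite_eq', mem_univ, if_true, mul_comm (C a)]
  have h1 : aeval c (pderiv i f) + C a * aeval c (pderiv j f) = 0 := by
    rw [← hderiv, hf, Polynomial.derivative_zero]
  have h2 := congrArg derivative h1
  rw [Polynomial.derivative_zero, Polynomial.derivative_add, Polynomial.derivative_C_mul, hderiv,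
    hderiv, pderiv_pderiv_comm j i] at h2
  simp only [tangentHessian, map_add, map_sub, map_mul, map_pow, map_ofNat]
  rw [eq_neg_of_add_eq_zero_left h1]
  linear_combination (aeval c (pderiv j f)) ^ 2 * h2

theorem totalDegree_pderiv_le (i : σ) (f : MvPolynomial σ R) :
    (pderiv i f).totalDegree ≤ f.totalDegree - 1 := by
  refine Finset.sup_le fun e he => ?_
  rw [MvPolynomial.mem_support_iff, MvPolynomial.coeff_pderiv] at he
  have := MvPolynomial.le_totalDegree (MvPolynomial.mem_support_iff.mpr (left_ne_zero_of_mul he))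
  rw [Finsupp.sum_add_index' (by simp) (by simp), Finsupp.sum_single_index rfl] at this
  exact Nat.le_sub_one_of_lt this

theorem totalDegree_tangentHessian_le (i j : σ) (f : MvPolynomial σ R) :
    (tangentHessian i j f).totalDegree ≤ 3 * f.totalDegree := by
  have h1 (k) : (pderiv k f).totalDegree ≤ f.totalDegree :=
    (totalDegree_pderiv_le k f).trans (Nat.sub_le _ _)
  have h2 (k l) : (pderiv k (pderiv l f)).totalDegree ≤ f.totalDegree :=
    (totalDegree_pderiv_le k _).trans ((Nat.sub_le _ _).trans (h1 l))
  have hmul {a b c : MvPolynomial σ R} (ha : a.totalDegree ≤ f.totalDegree)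
      (hb : b.totalDegree ≤ f.totalDegree) (hc : c.totalDegree ≤ f.totalDegree) :
      (a * b * c).totalDegree ≤ 3 * f.totalDegree := by
    have := MvPolynomial.totalDegree_mul (a * b) c
    have := MvPolynomial.totalDegree_mul a b
    omega
  have h2' (k l) : (2 * pderiv k (pderiv l f)).totalDegree ≤ f.totalDegree := by
    rw [← map_ofNat MvPolynomial.C 2, MvPolynomial.C_mul']
    exact (MvPolynomial.totalDegree_smul_le _ _).trans (h2 k l)
  rw [tangentHessian, pow_two, pow_two, ← mul_assoc, ← mul_assoc]
  refine (MvPolynomial.totalDegree_add _ _).trans (max_le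
    ((MvPolynomial.totalDegree_sub _ _).trans (max_le ?_ ?_)) ?_)
  · exact hmul (h2 i i) (h1 j) (h1 j)
  · exact hmul (h2' i j) (h1 i) (h1 j)
  · exact hmul (h2 j j) (h1 i) (h1 i)

theorem notMem_vars_of_pderiv_eq_zero [NoZeroDivisors R] {i : σ} {f : MvPolynomial σ R}
    (hcast : ∀ n : ℕ, 0 < n → n ≤ f.totalDegree → (n : R) ≠ 0) (hf : pderiv i f = 0) :
    i ∉ f.vars := by
  rw [MvPolynomial.mem_vars_iff_mem_support]
  rintro ⟨e, he, hie⟩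
  have hi : 0 < e i := Nat.pos_of_ne_zero (Finsupp.mem_support_iff.mp hie)
  have hle : Finsupp.single i 1 ≤ e := by simpa using Nat.one_le_iff_ne_zero.mpr hi.ne'
  have hcoeff := MvPolynomial.coeff_pderiv f (e - Finsupp.single i 1) (i := i)
  rw [hf, MvPolynomial.coeff_zero, tsub_add_cancel_of_le hle, Finsupp.tsub_apply,
    Finsupp.single_eq_same, ← Nat.cast_add_one, Nat.sub_add_cancel hi] at hcoeff
  have hdeg : e i ≤ f.totalDegree := le_trans
    (single_le_sum (f := e) (fun _ _ => Nat.zero_le _) hie) (MvPolynomial.le_totalDegree he)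
  exact (mul_eq_zero.mp hcoeff.symm).elim (MvPolynomial.mem_support_iff.mp he) (hcast _ hi hdeg)

theorem not_dvd_pderiv [IsDomain R] {i : σ} {f : MvPolynomial σ R} (hf : pderiv i f ≠ 0) :
    ¬ f ∣ pderiv i f := by
  intro hdvd
  have h := MvPolynomial.totalDegree_le_of_dvd_of_isDomain hdvd hf
  have hdeg : f.totalDegree = 0 := by
    have := totalDegree_pderiv_le i f
    omega
  rw [MvPolynomial.totalDegree_eq_zero_iff_eq_C] at hdeg
  exact hf (by rw [hdeg, MvPolynomial.pderiv_C])

end TangentHessian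

section RichLines

variable {F : Type*} [Field F]

theorem aeval_xyLine_tangentHessian_eq_zero {l : F × F × F} {f : MvPolynomial (Fin 3) F}
    (hf : aeval (xyLine l) f = 0) : aeval (xyLine l) (tangentHessian 0 1 f) = 0 :=
  aeval_tangentHessian_eq_zero (a := l.1) (fun k => by fin_cases k <;> simp [xyLine]) hf

theorem aeval_xzLine_tangentHessian_eq_zero {l : F × F × F} {f : MvPolynomial (Fin 3) F}
    (hf : aeval (xzLine l) f = 0) : aeval (xzLine l) (tangentHessian 0 2 f) = 0 :=
  aeval_tangentHessian_eq_zero (a := l.2.1) (fun k => by fin_cases k <;> simp [xzLine]) hf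

theorem aeval_eq_zero_of_totalDegree_lt_card {σ : Type*} {c : σ → F[X]}
    (hc : ∀ i, (c i).natDegree ≤ 1) {f : MvPolynomial σ F} {Z : Finset F}
    (hZ : f.totalDegree < #Z) (h : ∀ t ∈ Z, (aeval c f).eval t = 0) : aeval c f = 0 :=
  Polynomial.eq_zero_of_natDegree_lt_card_of_eval_eq_zero' _ Z h
    ((natDegree_aeval_le hc f).trans_lt hZ)

/-- The lines `xzLine l` and `xyLine b` meet in the point with first coordinate `t`. -/
def MeetAt (l b : F × F × F) (t : F) : Prop :=
  ∀ i, (xzLine l i).eval t = (xyLine b i).eval t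

theorem MeetAt.eval_aeval_eq {l b : F × F × F} {t : F} (h : MeetAt l b t)
    (f : MvPolynomial (Fin 3) F) : (aeval (xzLine l) f).eval t = (aeval (xyLine b) f).eval t := by
  rw [eval_aeval, eval_aeval, funext h]

/-- At most `k` of the lines `xzLine l`, `l ∈ T`, lie on any given bilinear surface. -/
def BilinearCountLE (T : Finset (F × F × F)) (k : ℕ) : Prop :=
  ∀ ε β γ δ : F, ∀ T' ⊆ T, (∀ l ∈ T', aeval (xzLine l) (bilinearSurface ε β γ δ) = 0) → #T' ≤ k

theorem BilinearCountLE.mono {T T' : Finset (F × F × F)} {k : ℕ} (h : BilinearCountLE T k)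
    (hT : T' ⊆ T) : BilinearCountLE T' k :=
  fun ε β γ δ S hS => h ε β γ δ S (hS.trans hT)

variable {f h : MvPolynomial (Fin 3) F} {D k : ℕ} {B T : Finset (F × F × F)}

theorem card_xzLine_le_of_pderiv_eq_zero (hf : f ≠ 0)
    (hcast : ∀ n : ℕ, 0 < n → n ≤ f.totalDegree → (n : F) ≠ 0) (hx : pderiv 0 f = 0)
    (hinj : Set.InjOn Prod.fst (T : Set (F × F × F))) (hslope : ∀ l ∈ T, l.2.1 ≠ 0)
    (hT : ∀ l ∈ T, aeval (xzLine l) f = 0) : #T ≤ f.totalDegree := by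
  classical
  obtain ⟨r, rfl⟩ := MvPolynomial.exists_rename_eq_of_vars_subset_range f Fin.succ
    (Fin.succ_injective 2) fun i hi => Fin.exists_succ_eq.mpr fun h0 =>
      notMem_vars_of_pderiv_eq_zero hcast hx (h0 ▸ hi)
  have hr : r ≠ 0 := fun h0 => hf (by rw [h0, map_zero])
  have hdeg : r.totalDegree ≤ (MvPolynomial.rename Fin.succ r).totalDegree := by
    have hinv : Fin.predAbove 0 ∘ Fin.succ = (id : Fin 2 → Fin 2) := funext fun i => by simp
    simpa [MvPolynomial.rename_rename, hinv] using
      MvPolynomial.totalDegree_rename_le (Fin.predAbove 0) (MvPolynomial.rename Fin.succ r)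
  rw [← card_image_of_injOn hinj]
  refine (card_le_totalDegree_of_aeval_eq_zero hr fun y hy => ?_).trans hdeg
  obtain ⟨l, hl, rfl⟩ := mem_image.mp hy
  refine ⟨l.2.1, l.2.2, hslope l hl, ?_⟩
  have := hT l hl
  rwa [MvPolynomial.aeval_rename] at this

theorem aeval_xzLine_eq_zero_or {g : MvPolynomial (Fin 3) F} {e : ℕ} (hh : h = f ^ e * g)
    (hfD : f.totalDegree ≤ D) (hgD : g.totalDegree ≤ D) (hB : ∀ b ∈ B, aeval (xyLine b) h = 0)
    {l : F × F × F} (hl : ∃ Z : Finset F, 4 * D < #Z ∧ ∀ t ∈ Z, ∃ b ∈ B, MeetAt l b t) :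
    aeval (xzLine l) g = 0 ∨ aeval (xzLine l) (tangentHessian 0 1 f) = 0 := by
  classical
  rw [or_iff_not_imp_left]
  intro hg
  obtain ⟨Z, hZ, hmeet⟩ := hl
  have hsmall : #{t ∈ Z | (aeval (xzLine l) g).eval t = 0} ≤ D := by
    contrapose! hg
    exact aeval_eq_zero_of_totalDegree_lt_card (natDegree_xzLine_le l) (hgD.trans_lt hg)
      fun t ht => (mem_filter.mp ht).2
  have hsplit := card_filter_add_card_filter_not (s := Z) fun t => (aeval (xzLine l) g).eval t = 0
  refine aeval_eq_zero_of_totalDegree_lt_card (natDegree_xzLine_le l)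
    (Z := {t ∈ Z | ¬ (aeval (xzLine l) g).eval t = 0}) ?_ fun t ht => ?_
  · have := totalDegree_tangentHessian_le 0 1 f
    omega
  · obtain ⟨htZ, htg⟩ := mem_filter.mp ht
    obtain ⟨b, hb, hbt⟩ := hmeet t htZ
    rw [hbt.eval_aeval_eq] at htg ⊢
    have hbh := hB b hb
    rw [hh, map_mul, map_pow, mul_eq_zero] at hbh
    rcases hbh with hbf | hbg
    · rw [aeval_xyLine_tangentHessian_eq_zero (eq_zero_of_pow_eq_zero hbf), Polynomial.eval_zero]
    · simp [hbg] at htg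

theorem card_xzLine_le_of_not_dvd_tangentHessian (hf : Irreducible f) (h0 : h ≠ 0)
    (hhD : h.totalDegree ≤ D) (hfh : f ∣ h) (hf1 : ¬ f ∣ tangentHessian 0 1 f)
    (hB : ∀ b ∈ B, aeval (xyLine b) h = 0)
    (hinj : Set.InjOn Prod.fst (T : Set (F × F × F))) (hslope : ∀ l ∈ T, l.2.1 ≠ 0)
    (hT : ∀ l ∈ T, aeval (xzLine l) f = 0)
    (hmeet : ∀ l ∈ T, ∃ Z : Finset F, 4 * D < #Z ∧ ∀ t ∈ Z, ∃ b ∈ B, MeetAt l b t) :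
    #T ≤ 8 * f.totalDegree * D := by
  classical
  obtain ⟨g, hg, hfg⟩ :=
    (FiniteMultiplicity.of_prime_left hf.prime h0).exists_eq_pow_mul_and_not_dvd
  have hfD := (MvPolynomial.totalDegree_le_of_dvd_of_isDomain hfh h0).trans hhD
  have hgD := (MvPolynomial.totalDegree_le_of_dvd_of_isDomain (Dvd.intro_left _ hg.symm) h0).trans
    hhD
  have hcard {g : MvPolynomial (Fin 3) F} (hfg : ¬ f ∣ g) :
      #{l ∈ T | aeval (xzLine l) g = 0} ≤ 2 * f.totalDegree * g.totalDegree :=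
    card_xzLine_le_of_not_dvd hf hfg (hinj.mono fun l hl => (mem_filter.mp hl).1)
      (fun l hl => hslope l (mem_filter.mp hl).1) (fun l hl => hT l (mem_filter.mp hl).1)
      fun l hl => (mem_filter.mp hl).2
  have hcover : T ⊆ {l ∈ T | aeval (xzLine l) g = 0} ∪
      {l ∈ T | aeval (xzLine l) (tangentHessian 0 1 f) = 0} := fun l hl => by
    rw [← filter_or]
    exact mem_filter.mpr ⟨hl, aeval_xzLine_eq_zero_or hg hfD hgD hB (hmeet l hl)⟩
  calc #T ≤ 2 * f.totalDegree * g.totalDegree +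
        2 * f.totalDegree * (tangentHessian 0 1 f).totalDegree :=
        (card_le_card hcover).trans ((card_union_le _ _).trans (add_le_add (hcard hfg) (hcard hf1)))
    _ ≤ 2 * f.totalDegree * D + 2 * f.totalDegree * (3 * D) := by
        gcongr
        exact (totalDegree_tangentHessian_le 0 1 f).trans (by gcongr)
    _ = 8 * f.totalDegree * D := by ring

theorem card_xzLine_le_of_irreducible_dvd (hf : Irreducible f) (h0 : h ≠ 0)
    (hhD : h.totalDegree ≤ D) (hfh : f ∣ h) (hcast : ∀ n : ℕ, 0 < n → n ≤ D → (n : F) ≠ 0)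
    (hB : ∀ b ∈ B, aeval (xyLine b) h = 0)
    (hinj : Set.InjOn Prod.fst (T : Set (F × F × F))) (hslope : ∀ l ∈ T, l.2.1 ≠ 0)
    (hT : ∀ l ∈ T, aeval (xzLine l) f = 0)
    (hmeet : ∀ l ∈ T, ∃ Z : Finset F, 4 * D < #Z ∧ ∀ t ∈ Z, ∃ b ∈ B, MeetAt l b t)
    (hk : BilinearCountLE T k) : #T ≤ 8 * f.totalDegree * D + k := by
  have hfD := (MvPolynomial.totalDegree_le_of_dvd_of_isDomain hfh h0).trans hhD
  have hcast' (n : ℕ) (hn : 0 < n) (hnf : n ≤ f.totalDegree) := hcast n hn (hnf.trans hfD)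
  have hdd : f.totalDegree * f.totalDegree ≤ f.totalDegree * D := Nat.mul_le_mul_left _ hfD
  by_cases hx : pderiv 0 f = 0
  · have := card_xzLine_le_of_pderiv_eq_zero hf.ne_zero hcast' hx hinj hslope hT
    nlinarith [Nat.le_mul_self f.totalDegree]
  by_cases hf2 : f ∣ tangentHessian 0 2 f
  swap
  · have := card_xzLine_le_of_not_dvd hf hf2 hinj hslope hT fun l hl =>
      aeval_xzLine_tangentHessian_eq_zero (hT l hl)
    have := Nat.mul_le_mul_left (2 * f.totalDegree) (totalDegree_tangentHessian_le 0 2 f)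
    nlinarith
  by_cases hf1 : f ∣ tangentHessian 0 1 f
  swap
  · exact (card_xzLine_le_of_not_dvd_tangentHessian hf h0 hhD hfh hf1 hB hinj hslope hT hmeet).trans
      (Nat.le_add_right _ _)
  by_cases hsing : ∀ l ∈ T, aeval (xzLine l) (pderiv 0 f) = 0
  · have := card_xzLine_le_of_not_dvd hf (not_dvd_pderiv hx) hinj hslope hT hsing
    have := Nat.mul_le_mul_left (2 * f.totalDegree)
      ((totalDegree_pderiv_le 0 f).trans (Nat.sub_le _ 1))
    nlinarith
  push Not at hsing
  obtain ⟨l, hl, hlx⟩ := hsing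
  obtain ⟨Z, hZ, -⟩ := hmeet l hl
  obtain ⟨t, ht⟩ : ∃ t, (aeval (xzLine l) (pderiv 0 f)).eval t ≠ 0 := by
    contrapose! hlx
    refine aeval_eq_zero_of_totalDegree_lt_card (natDegree_xzLine_le l) (Z := Z) ?_ fun t _ => hlx t
    have := totalDegree_pderiv_le 0 f
    omega
  obtain ⟨ε, β, γ, δ, g, hg⟩ := exists_dvd_bilinearSurface hf hcast' hf1 hf2
    (P := fun i => (xzLine l i).eval t) (by rw [← eval_aeval, hT l hl, Polynomial.eval_zero])
    (by rwa [← eval_aeval])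
  exact (hk ε β γ δ T subset_rfl fun l' hl' => by rw [hg, map_mul, hT l' hl', zero_mul]).trans
    (Nat.le_add_left _ _)

theorem card_filter_xzLine_le_of_dvd [DecidableEq F] (h0 : h ≠ 0) (hhD : h.totalDegree ≤ D)
    (hcast : ∀ n : ℕ, 0 < n → n ≤ D → (n : F) ≠ 0) (hB : ∀ b ∈ B, aeval (xyLine b) h = 0)
    (hinj : Set.InjOn Prod.fst (T : Set (F × F × F))) (hslope : ∀ l ∈ T, l.2.1 ≠ 0)
    (hmeet : ∀ l ∈ T, ∃ Z : Finset F, 4 * D < #Z ∧ ∀ t ∈ Z, ∃ b ∈ B, MeetAt l b t)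
    (hk : BilinearCountLE T k) (hfh : f ∣ h) :
    #{l ∈ T | aeval (xzLine l) f = 0} ≤ f.totalDegree * (8 * D + k) := by
  induction f using WfDvdMonoid.induction_on_irreducible with
  | zero => exact absurd (zero_dvd_iff.mp hfh) h0
  | unit u hu =>
    rw [filter_false_of_mem fun l _ => (hu.map (aeval (xzLine l))).ne_zero]
    simp
  | mul g f hg hf ih =>
    have hsub : T.filter (fun l => aeval (xzLine l) f = 0) ⊆ T := filter_subset _ _
    have hcard := card_xzLine_le_of_irreducible_dvd hf h0 hhD (dvd_of_mul_right_dvd hfh) hcast hB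
      (T := {l ∈ T | aeval (xzLine l) f = 0}) (hinj.mono hsub) (fun l hl => hslope l (hsub hl))
      (fun l hl => (mem_filter.mp hl).2) (fun l hl => hmeet l (hsub hl)) (hk.mono hsub)
    have hdeg : f.totalDegree ≠ 0 := fun hdeg => hf.not_isUnit <|
      MvPolynomial.isUnit_iff_totalDegree_of_isReduced.mpr ⟨isUnit_iff_ne_zero.mpr fun hc =>
        hf.ne_zero (by rw [MvPolynomial.totalDegree_eq_zero_iff_eq_C.mp hdeg, hc, map_zero]), hdeg⟩
    simp only [map_mul, mul_eq_zero, filter_or]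
    rw [MvPolynomial.totalDegree_mul_of_isDomain hf.ne_zero hg]
    have := card_union_le {l ∈ T | aeval (xzLine l) f = 0} {l ∈ T | aeval (xzLine l) g = 0}
    have := ih (dvd_of_mul_left_dvd hfh)
    have := Nat.mul_le_mul_right k (Nat.one_le_iff_ne_zero.mpr hdeg)
    nlinarith

theorem exists_card_eq_and_meetAt {S : Finset (F × F × F)} {l : F × F × F}
    (hinj : Set.InjOn (fun b : F × F × F => b.2.2) S) (hmeet : ∀ b ∈ S, ∃ t, MeetAt l b t) :
    ∃ Z : Finset F, #Z = #S ∧ ∀ t ∈ Z, ∃ b ∈ S, MeetAt l b t := by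
  classical
  choose! τ hτ using hmeet
  refine ⟨S.image τ, card_image_of_injOn fun b hb b' hb' hbb => hinj hb hb' ?_, fun t ht => ?_⟩
  · have h := hτ b hb 2
    have h' := hτ b' hb' 2
    rw [← hbb, h] at h'
    simpa [xyLine] using h'
  · obtain ⟨b, hb, rfl⟩ := mem_image.mp ht
    exact ⟨b, hb, hτ b hb⟩

theorem card_rich_lines_le {L₁ L₂ : Finset (F × F × F)} {N : F × F × F → Finset (F × F × F)}
    {m q d : ℕ} (hm : 0 < m) (hL₁ : #L₁ ≤ m) (hq : 0 < q) (hd : 0 < d)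
    (hmq : 6 * m ≤ q * (d + 1) ^ 2) (hcast : ∀ n : ℕ, 0 < n → n ≤ 3 * d → (n : F) ≠ 0)
    (hinj₁ : Set.InjOn (fun b : F × F × F => b.2.2) L₁)
    (hinj₂ : Set.InjOn Prod.fst (L₂ : Set (F × F × F))) (hslope : ∀ l ∈ L₂, l.2.1 ≠ 0)
    (hN : ∀ l ∈ L₂, N l ⊆ L₁) (hrich : ∀ l ∈ L₂, 30 * q * d ≤ #(N l))
    (hmeet : ∀ l ∈ L₂, ∀ b ∈ N l, ∃ t, MeetAt l b t) (hk : BilinearCountLE L₂ k) :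
    #L₂ ≤ 144 * d ^ 2 + 6 * k * d := by
  classical
  obtain ⟨B, hBL, hqB, hJ⟩ := exists_subset_card_le_two_mul_card_filter (s := 12 * d) L₂ N hm hL₁
    hq hN fun l hl => le_trans (by nlinarith) (hrich l hl)
  have : 3 * #B ≤ (d + 1) ^ 2 := Nat.le_of_mul_le_mul_left (by linarith) hq
  obtain ⟨h, h0, hdeg, hvan⟩ := exists_aeval_eq_zero_of_mul_lt_pow (s := B) (d := d)
    (fun l _ => natDegree_xyLine_le l) (by rw [Fintype.card_fin]; nlinarith)
  rw [Fintype.card_fin] at hdeg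
  set J := {l ∈ L₂ | 12 * d < #(N l ∩ B)}
  have hJL : J ⊆ L₂ := filter_subset _ _
  have hZ (l) (hl : l ∈ J) :
      ∃ Z : Finset F, 4 * (3 * d) < #Z ∧ ∀ t ∈ Z, ∃ b ∈ B, MeetAt l b t := by
    obtain ⟨Z, hZ, hZm⟩ := exists_card_eq_and_meetAt (S := N l ∩ B) (l := l)
      (hinj₁.mono fun b hb => hBL (mem_inter.mp hb).2)
      fun b hb => hmeet l (hJL hl) b (mem_inter.mp hb).1
    refine ⟨Z, ?_, fun t ht => ?_⟩
    · have := (mem_filter.mp hl).2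
      omega
    · obtain ⟨b, hb, hbt⟩ := hZm t ht
      exact ⟨b, (mem_inter.mp hb).2, hbt⟩
  have hJh (l) (hl : l ∈ J) : aeval (xzLine l) h = 0 := by
    obtain ⟨Z, hZc, hZm⟩ := hZ l hl
    refine aeval_eq_zero_of_totalDegree_lt_card (natDegree_xzLine_le l) (Z := Z) (by omega)
      fun t ht => ?_
    obtain ⟨b, hb, hbt⟩ := hZm t ht
    rw [hbt.eval_aeval_eq, hvan b hb, Polynomial.eval_zero]
  have hJcard := card_filter_xzLine_le_of_dvd h0 hdeg hcast hvan (hinj₂.mono hJL)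
    (fun l hl => hslope l (hJL hl)) hZ (hk.mono hJL) dvd_rfl
  rw [filter_true_of_mem hJh] at hJcard
  have := Nat.mul_le_mul_right (8 * (3 * d) + k) hdeg
  nlinarith

end RichLines

section PointsPlanes

local notation "ι" => algebraMap (Polynomial _) (RatFunc _)

variable {K : Type*} [Field K]

/-- Incidence of the point `x = (x₁, x₂, x₃)` with the plane `{x | x₁ y₁ + x₂ y₂ + x₃ = y₃}`, which
is encoded by its coefficients `y = (y₁, y₂, y₃)`. -/
def Incident (x y : K × K × K) : Prop := x.1 * y.1 + x.2.1 * y.2.1 + x.2.2 = y.2.2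

instance [DecidableEq K] (x y : K × K × K) : Decidable (Incident x y) :=
  inferInstanceAs (Decidable (_ = _))

/-- The denominator of the slope of `pointLine x`. -/
noncomputable def pointDenom (x : K × K × K) : K[X] := C x.2.2 - X ^ 2 - X ^ 3 * C x.1

/-- The denominator of the constant coordinate of `planeLine y`. -/
noncomputable def planeDenom (y : K × K × K) : K[X] := C y.1 + X ^ 3

/-- The numerator of the constant coordinate of `planeLine y`. -/
noncomputable def planeNumer (y : K × K × K) : K[X] := C y.2.2 - X * C y.2.1 - X ^ 2

/-- The line over `K(X)`, in the encoding of `xyLine`, attached to a point of `K³`. Together with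
`planeLine` it turns incidences into meeting lines; the indeterminate acts as a generic parameter
that places the lines of distinct points, and those of distinct planes, in distinct planes. -/
noncomputable def pointLine (x : K × K × K) : RatFunc K × RatFunc K × RatFunc K :=
  (ι (pointDenom x), RatFunc.C x.1, (RatFunc.C x.2.1 - RatFunc.X) / ι (pointDenom x))

/-- The line over `K(X)`, in the encoding of `xzLine`, attached to a plane of `K³`. -/
noncomputable def planeLine (y : K × K × K) : RatFunc K × RatFunc K × RatFunc K :=
  (ι (planeNumer y) / ι (planeDenom y), ι (planeDenom y) / RatFunc.C y.2.1, -1 / RatFunc.C y.2.1)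

theorem pointDenom_ne_zero (x : K × K × K) : pointDenom x ≠ 0 := fun h => by
  simpa [pointDenom, Polynomial.coeff_X_pow, Polynomial.coeff_C] using
    congr_arg (Polynomial.coeff · 2) h

theorem planeDenom_ne_zero (y : K × K × K) : planeDenom y ≠ 0 := fun h => by
  simpa [planeDenom, Polynomial.coeff_X_pow, Polynomial.coeff_C] using
    congr_arg (Polynomial.coeff · 3) h

theorem planeDenom_inj {y y' : K × K × K} : planeDenom y = planeDenom y' ↔ y.1 = y'.1 := by
  rw [planeDenom, planeDenom, add_left_inj, Polynomial.C_inj]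

theorem snd_eq_of_planeNumer_eq {y y' : K × K × K} (h : planeNumer y = planeNumer y') :
    y.2 = y'.2 := by
  refine Prod.ext ?_ ?_
  · simpa [planeNumer, Polynomial.coeff_X_pow, Polynomial.coeff_C] using
      congr_arg (Polynomial.coeff · 1) h
  · simpa [planeNumer] using congr_arg (Polynomial.coeff · 0) h

theorem pointLine_slope_injective : Function.Injective fun x : K × K × K => (pointLine x).2.2 := by
  intro x x' h
  have expand (x x' : K × K × K) : (C x.2.1 - X) * pointDenom x' = C x'.1 * X ^ 4
      + C (1 - x.2.1 * x'.1) * X ^ 3 + C (-x.2.1) * X ^ 2 + C (-x'.2.2) * X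
      + C (x.2.1 * x'.2.2) := by
    simp only [pointDenom, map_sub, map_neg, map_mul, map_one]
    ring
  have hne (x : K × K × K) : ι (pointDenom x) ≠ 0 :=
    RatFunc.algebraMap_ne_zero (pointDenom_ne_zero x)
  simp only [pointLine, ← RatFunc.algebraMap_C, ← RatFunc.algebraMap_X, ← map_sub] at h
  rw [div_eq_div_iff (hne _) (hne _), ← map_mul, ← map_mul,
    (RatFunc.algebraMap_injective K).eq_iff, expand, expand] at h
  have hcoeff (n : ℕ) := congr_arg (Polynomial.coeff · n) h
  simp only [Polynomial.coeff_add, Polynomial.coeff_C_mul, Polynomial.coeff_X,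
    Polynomial.coeff_X_pow, Polynomial.coeff_C] at hcoeff
  refine Prod.ext ?_ (Prod.ext ?_ ?_)
  · simpa using (hcoeff 4).symm
  · simpa using hcoeff 2
  · simpa using (hcoeff 1).symm

theorem planeLine_fst_injective : Function.Injective fun y : K × K × K => (planeLine y).1 := by
  intro y y' h
  have expand (y y' : K × K × K) : planeNumer y * planeDenom y' = C (-1) * X ^ 5
      + C (-y.2.1) * X ^ 4 + C y.2.2 * X ^ 3 + C (-y'.1) * X ^ 2 + C (-y.2.1 * y'.1) * X
      + C (y.2.2 * y'.1) := by
    simp only [planeNumer, planeDenom, map_neg, map_mul, map_one]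
    ring
  have hne (y : K × K × K) : ι (planeDenom y) ≠ 0 :=
    RatFunc.algebraMap_ne_zero (planeDenom_ne_zero y)
  simp only [planeLine] at h
  rw [div_eq_div_iff (hne _) (hne _), ← map_mul, ← map_mul,
    (RatFunc.algebraMap_injective K).eq_iff, expand, expand] at h
  have hcoeff (n : ℕ) := congr_arg (Polynomial.coeff · n) h
  simp only [Polynomial.coeff_add, Polynomial.coeff_C_mul, Polynomial.coeff_X,
    Polynomial.coeff_X_pow, Polynomial.coeff_C] at hcoeff
  refine Prod.ext ?_ (Prod.ext ?_ ?_)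
  · simpa using (hcoeff 2).symm
  · simpa using hcoeff 4
  · simpa using hcoeff 3

theorem Incident.exists_meetAt {x y : K × K × K} (h : Incident x y) (hy : y.2.1 ≠ 0) :
    ∃ t, MeetAt (planeLine y) (pointLine x) t := by
  have hx := RatFunc.algebraMap_ne_zero (pointDenom_ne_zero x)
  have hv := RatFunc.algebraMap_ne_zero (planeDenom_ne_zero y)
  have hC : RatFunc.C y.2.1 ≠ 0 := (map_ne_zero _).mpr hy
  have key : (C x.2.1 - X) * C y.2.1 + pointDenom x = planeNumer y - C x.1 * planeDenom y := by
    rw [pointDenom, planeNumer, planeDenom, ← h]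
    simp only [map_add, map_mul]
    ring
  have key := congr_arg (algebraMap K[X] (RatFunc K)) key
  simp only [map_add, map_sub, map_mul, RatFunc.algebraMap_C, RatFunc.algebraMap_X] at key
  refine ⟨(ι (planeNumer y) / ι (planeDenom y) - RatFunc.C x.1) / ι (pointDenom x),
    Fin.forall_fin_succ.mpr ⟨by simp [xyLine, xzLine, planeLine], Fin.forall_fin_two.mpr ⟨?_, ?_⟩⟩⟩
  · simp only [xyLine, xzLine, planeLine, pointLine, Matrix.cons_val, Polynomial.eval_add,
      Polynomial.eval_mul, Polynomial.eval_C, Polynomial.eval_X, Fin.succ_zero_eq_one]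
    field_simp
    ring
  · simp only [xyLine, xzLine, planeLine, pointLine, Matrix.cons_val, Polynomial.eval_add,
      Polynomial.eval_mul, Polynomial.eval_C, Polynomial.eval_X, Fin.succ_one_eq_two]
    field_simp
    linear_combination -key

theorem eq_of_aeval_planeLine_bilinearSurface_eq_zero {y : K × K × K} (hy : y.2.1 ≠ 0)
    {ε β γ δ : RatFunc K} (h : aeval (xzLine (planeLine y)) (bilinearSurface ε β γ δ) = 0) :
    RatFunc.C y.2.1 = ε * ι (planeNumer y) + γ * ι (planeDenom y) ∧
      1 = β * ι (planeNumer y) + δ * ι (planeDenom y) := by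
  have hv := RatFunc.algebraMap_ne_zero (planeDenom_ne_zero y)
  have hC : RatFunc.C y.2.1 ≠ 0 := (map_ne_zero _).mpr hy
  have h₀ := congr_arg (Polynomial.eval 0) h
  have h₁ := congr_arg (Polynomial.eval 1) h
  simp only [xzLine, planeLine, bilinearSurface, map_sub, map_add, map_mul, MvPolynomial.aeval_X,
    MvPolynomial.algHom_C, Polynomial.algebraMap_eq, Matrix.cons_val, Polynomial.eval_sub,
    Polynomial.eval_X, Polynomial.eval_add, Polynomial.eval_mul, Polynomial.eval_C, mul_zero,
    zero_add, Polynomial.eval_zero, mul_one] at h₀ h₁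
  field_simp at h₀ h₁
  have hε : RatFunc.C y.2.1 = ε * ι (planeNumer y) + γ * ι (planeDenom y) :=
    mul_left_cancel₀ hv (by linear_combination h₁ - h₀)
  exact ⟨hε, mul_left_cancel₀ hC (by linear_combination h₀ + hε)⟩

variable [DecidableEq K]

/-- A family of planes, encoded as in `Incident`, none of which is parallel to the second axis, and
whose first two coefficients, as well as the planes with given first two coefficients, take at most
`k` values. -/
structure CoeffBounded (Q : Finset (K × K × K)) (k : ℕ) : Prop where
  ne_zero : ∀ y ∈ Q, y.2.1 ≠ 0
  card_image_fst : #(Q.image Prod.fst) ≤ k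
  card_image_snd : #(Q.image fun y => y.2.1) ≤ k
  card_fiber : ∀ a b, #{y ∈ Q | y.1 = a ∧ y.2.1 = b} ≤ k

variable {P Q Q' : Finset (K × K × K)} {k : ℕ}

theorem CoeffBounded.mono (hQ : CoeffBounded Q k) (h : Q' ⊆ Q) : CoeffBounded Q' k where
  ne_zero y hy := hQ.ne_zero y (h hy)
  card_image_fst := (card_le_card (image_subset_image h)).trans hQ.card_image_fst
  card_image_snd := (card_le_card (image_subset_image h)).trans hQ.card_image_snd
  card_fiber a b := (card_le_card (filter_subset_filter _ h)).trans (hQ.card_fiber a b)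

theorem CoeffBounded.card_le (hQ : CoeffBounded Q k) {ε β γ δ : RatFunc K}
    (h : ∀ y ∈ Q, aeval (xzLine (planeLine y)) (bilinearSurface ε β γ δ) = 0) : #Q ≤ k := by
  have hs (y) (hy : y ∈ Q) :=
    eq_of_aeval_planeLine_bilinearSurface_eq_zero (hQ.ne_zero y hy) (h y hy)
  have hinj := RatFunc.algebraMap_injective K
  by_cases hβ : β = 0
  swap
  · rw [← card_image_of_injOn (f := Prod.fst)]
    · exact hQ.card_image_fst
    intro y hy y' hy' hyy
    have h' := (hs y hy).2.symm.trans (hs y' hy').2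
    rw [planeDenom_inj.mpr hyy, add_left_inj] at h'
    exact Prod.ext hyy (snd_eq_of_planeNumer_eq (hinj (mul_left_cancel₀ hβ h')))
  have hfst (y) (hy : y ∈ Q) (y') (hy' : y' ∈ Q) : y.1 = y'.1 := by
    have h₁ := (hs y hy).2
    have h₂ := (hs y' hy').2
    rw [hβ, zero_mul, zero_add] at h₁ h₂
    have hδ : δ ≠ 0 := by rintro rfl; simp at h₁
    exact planeDenom_inj.mp (hinj (mul_left_cancel₀ hδ (h₁.symm.trans h₂)))
  by_cases hε : ε = 0
  · rcases Q.eq_empty_or_nonempty with rfl | ⟨y₀, hy₀⟩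
    · simp
    refine le_trans (card_le_card fun y hy => mem_filter.mpr ⟨hy, hfst y hy y₀ hy₀, ?_⟩)
      (hQ.card_fiber y₀.1 y₀.2.1)
    have h₁ := (hs y hy).1
    rw [planeDenom_inj.mpr (hfst y hy y₀ hy₀), hε, zero_mul] at h₁
    have h₂ := (hs y₀ hy₀).1
    rw [hε, zero_mul] at h₂
    exact RatFunc.C.injective (h₁.trans h₂.symm)
  · rw [← card_image_of_injOn (f := fun y : K × K × K => y.2.1)]
    · exact hQ.card_image_snd
    intro y hy y' hy' hyy
    have h₁ := (hs y hy).1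
    rw [planeDenom_inj.mpr (hfst y hy y' hy'), show y.2.1 = y'.2.1 from hyy, (hs y' hy').1,
      add_left_inj] at h₁
    exact Prod.ext (hfst y hy y' hy') (snd_eq_of_planeNumer_eq (hinj (mul_left_cancel₀ hε h₁))).symm

theorem card_rich_planes_le_of_sampling {p : ℕ} [CharP K p] {m q d : ℕ} (hm : 0 < m)
    (hP : #P ≤ m) (hq : 0 < q) (hd : 0 < d) (hmq : 6 * m ≤ q * (d + 1) ^ 2) (hp : 3 * d < p)
    (hQ : CoeffBounded Q k) (hrich : ∀ y ∈ Q, 30 * q * d ≤ #{x ∈ P | Incident x y}) :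
    #Q ≤ 144 * d ^ 2 + 6 * k * d := by
  have : CharP (RatFunc K) p := charP_of_injective_ringHom (RatFunc.C (K := K)).injective p
  have hinj₁ : Function.Injective (pointLine (K := K)) := fun x y h =>
    pointLine_slope_injective (congr_arg (·.2.2) h)
  have hinj₂ : Function.Injective (planeLine (K := K)) := fun x y h =>
    planeLine_fst_injective (congr_arg Prod.fst h)
  have hleft := Function.leftInverse_invFun hinj₂
  classical
  rw [← card_image_of_injective Q hinj₂]
  refine card_rich_lines_le (L₁ := P.image pointLine)
    (N := fun l => {x ∈ P | Incident x (Function.invFun planeLine l)}.image pointLine)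
    hm (card_image_le.trans hP) hq hd hmq ?_ ?_ ?_ ?_ ?_ ?_ ?_ ?_
  · intro n hn hnd h
    exact absurd (Nat.le_of_dvd hn ((CharP.cast_eq_zero_iff (RatFunc K) p n).mp h)) (by omega)
  · rw [coe_image]
    rintro _ ⟨x, -, rfl⟩ _ ⟨x', -, rfl⟩ h
    rw [pointLine_slope_injective h]
  · rw [coe_image]
    rintro _ ⟨y, -, rfl⟩ _ ⟨y', -, rfl⟩ h
    rw [planeLine_fst_injective h]
  · rw [forall_mem_image]
    exact fun y hy => div_ne_zero (RatFunc.algebraMap_ne_zero (planeDenom_ne_zero y))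
      ((map_ne_zero _).mpr (hQ.ne_zero y hy))
  · exact fun l _ => image_subset_image (filter_subset _ _)
  · simpa only [forall_mem_image, hleft _, card_image_of_injective _ hinj₁] using hrich
  · simp only [forall_mem_image, hleft _, mem_filter, and_imp]
    exact fun y hy x _ hxy => hxy.exists_meetAt (hQ.ne_zero y hy)
  · intro ε β γ δ T hT hv
    obtain ⟨S, hS, rfl⟩ := subset_image_iff.mp hT
    rw [card_image_of_injective _ hinj₂]
    exact (hQ.mono (by exact_mod_cast hS)).card_le fun y hy => hv _ (mem_image_of_mem _ hy)

end PointsPlanes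

section LayerCake

variable {α : Type*} {s : Finset α} {f : α → ℕ} {n k : ℕ} {Z : ℝ}

theorem sum_Icc_inv_le_one_add_log (n : ℕ) : ∑ r ∈ Icc 1 n, (r : ℝ)⁻¹ ≤ 1 + Real.log n := by
  simpa [harmonic_eq_sum_Icc] using harmonic_le_one_add_log n

theorem succ_pow_succ_le (r k : ℕ) : (r + 1) ^ (k + 1) ≤ r ^ (k + 1) + (k + 1) * (r + 1) ^ k := by
  induction k with
  | zero => simp
  | succ k ih =>
    have := Nat.mul_le_mul_left (r + 1) ih
    have := Nat.pow_le_pow_left (Nat.le_succ r) (k + 1)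
    rw [pow_succ' (r + 1) (k + 1), pow_succ' r (k + 1), pow_succ' (r + 1) k] at *
    linarith

theorem pow_succ_le_sum_Icc (r k : ℕ) : r ^ (k + 1) ≤ ∑ i ∈ Icc 1 r, (k + 1) * i ^ k := by
  induction r with
  | zero => simp
  | succ r ih =>
    rw [sum_Icc_succ_top (by omega)]
    exact (succ_pow_succ_le r k).trans (Nat.add_le_add_right ih _)

theorem sum_pow_succ_le_sum_Icc (hf : ∀ i ∈ s, f i ≤ n) :
    ∑ i ∈ s, f i ^ (k + 1) ≤ ∑ r ∈ Icc 1 n, (k + 1) * r ^ k * #{i ∈ s | r ≤ f i} := by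
  calc ∑ i ∈ s, f i ^ (k + 1)
      ≤ ∑ i ∈ s, ∑ r ∈ Icc 1 n with r ≤ f i, (k + 1) * r ^ k := by
        refine sum_le_sum fun i hi =>
          (pow_succ_le_sum_Icc _ k).trans_eq (sum_congr ?_ fun _ _ => rfl)
        ext r
        have := hf i hi
        simp only [mem_filter, mem_Icc]
        omega
    _ = ∑ r ∈ Icc 1 n, (k + 1) * r ^ k * #{i ∈ s | r ≤ f i} := by
        simp only [sum_filter, card_filter, mul_sum, mul_ite, mul_one, mul_zero]
        exact sum_comm

theorem sum_pow_succ_le_mul_log (hZ0 : 0 ≤ Z) (hf : ∀ i ∈ s, f i ≤ n)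
    (hZ : ∀ r ∈ Icc 1 n, (r : ℝ) ^ (k + 1) * #{i ∈ s | r ≤ f i} ≤ Z) :
    ∑ i ∈ s, (f i : ℝ) ^ (k + 1) ≤ (k + 1) * Z * (1 + Real.log n) := by
  calc ∑ i ∈ s, (f i : ℝ) ^ (k + 1)
      ≤ ∑ r ∈ Icc 1 n, (k + 1) * (r : ℝ) ^ k * #{i ∈ s | r ≤ f i} := by
        exact_mod_cast sum_pow_succ_le_sum_Icc hf
    _ ≤ ∑ r ∈ Icc 1 n, (k + 1) * Z * (r : ℝ)⁻¹ := by
        refine sum_le_sum fun r hr => ?_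
        have hr0 : (0 : ℝ) < r := by exact_mod_cast (mem_Icc.mp hr).1
        rw [← div_eq_mul_inv, le_div_iff₀ hr0]
        have := mul_le_mul_of_nonneg_left (hZ r hr) (by positivity : (0 : ℝ) ≤ k + 1)
        linear_combination this
    _ ≤ (k + 1) * Z * (1 + Real.log n) := by
        rw [← mul_sum]
        gcongr
        exact sum_Icc_inv_le_one_add_log n

end LayerCake

section Incidences

variable {K : Type*} [Field K] [DecidableEq K] {p : ℕ} [CharP K p]
  {P Q : Finset (K × K × K)} {m k R : ℕ}

theorem exists_sampling_parameters (hR0 : 0 < R) (hR : 10830 * m ≤ R ^ 2) (hp : 1083 * m < p * R)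
    (hRm : R ≤ m) : ∃ q d : ℕ, 0 < q ∧ 0 < d ∧ 6 * m ≤ q * (d + 1) ^ 2 ∧ 3 * d < p ∧
      30 * q * d ≤ R ∧ d * R ≤ 361 * m := by
  obtain ⟨d, hd⟩ : ∃ d, d = 360 * m / R + 1 := ⟨_, rfl⟩
  obtain ⟨q, hq⟩ : ∃ q, q = R / (30 * d) := ⟨_, rfl⟩
  have hd0 : 0 < d := hd ▸ Nat.succ_pos _
  have hdR : d * R ≤ 361 * m := by
    have := Nat.div_mul_le_self (360 * m) R
    rw [hd]
    linarith
  have hdR' : 360 * m < d * R := by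
    have := Nat.lt_div_mul_add (a := 360 * m) hR0
    rw [hd]
    linarith
  have hdle : 30 * d ≤ R := Nat.le_of_mul_le_mul_right (by nlinarith) hR0
  have hq0 : 0 < q := hq ▸ Nat.div_pos hdle (by positivity)
  have hqR : q * (30 * d) ≤ R := hq ▸ Nat.div_mul_le_self _ _
  have hRq : R < q * (30 * d) + 30 * d := hq ▸ Nat.lt_div_mul_add (by positivity)
  refine ⟨q, d, hq0, hd0, ?_, Nat.lt_of_mul_lt_mul_right (a := R) (by linarith), by linarith, hdR⟩
  have : d * R ≤ d * (60 * (q * d)) := Nat.mul_le_mul_left _ (by nlinarith)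
  nlinarith

theorem card_rich_planes_le (hP : #P ≤ m) (hRm : R ≤ m) (hR0 : 0 < R) (hR : 10830 * m ≤ R ^ 2)
    (hp : 1083 * m < p * R) (hQ : CoeffBounded Q k)
    (hrich : ∀ y ∈ Q, R ≤ #{x ∈ P | Incident x y}) :
    (#Q : ℝ) ≤ 2 * 10 ^ 7 * ((m / R) ^ 2 + k * (m / R)) := by
  obtain ⟨q, d, hq, hd, hmq, hdp, hqd, hdR⟩ := exists_sampling_parameters hR0 hR hp hRm
  have hcard : (#Q : ℝ) ≤ 144 * d ^ 2 + 6 * k * d := by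
    exact_mod_cast card_rich_planes_le_of_sampling (hR0.trans_le hRm) hP hq hd hmq hdp hQ
      fun y hy => hqd.trans (hrich y hy)
  have hdle : (d : ℝ) ≤ 361 * (m / R) := by
    rw [← mul_div_assoc, le_div_iff₀ (by exact_mod_cast hR0)]
    exact_mod_cast hdR
  calc (#Q : ℝ) ≤ 144 * (361 * (m / R)) ^ 2 + 6 * k * (361 * (m / R)) := hcard.trans (by gcongr)
    _ ≤ 2 * 10 ^ 7 * ((m / R) ^ 2 + k * (m / R)) := by
        have : 0 ≤ ((m : ℝ) / R) ^ 2 := by positivity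
        have : 0 ≤ (k : ℝ) * (m / R) := by positivity
        linarith

theorem mul_card_rich_planes_le (hp : 0 < p) (hP : #P ≤ m) (hQm : #Q ≤ m) (hRm : R ≤ m)
    (hR0 : 0 < R) (hQ : CoeffBounded Q k) (hrich : ∀ y ∈ Q, R ≤ #{x ∈ P | Incident x y}) :
    R * (#Q : ℝ) ≤ 3 * 10 ^ 7 * (m * √m + k * m + (m : ℝ) ^ 2 / p) := by
  have hR : (0 : ℝ) < R := by exact_mod_cast hR0
  have hp' : (0 : ℝ) < p := by exact_mod_cast hp
  have hs : √(m : ℝ) * √m = m := Real.mul_self_sqrt (by positivity)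
  have hms : 0 ≤ m * √(m : ℝ) := by positivity
  have hkm : 0 ≤ (k : ℝ) * m := by positivity
  have hmp : 0 ≤ (m : ℝ) ^ 2 / p := by positivity
  by_cases hsmall : (R : ℝ) < 110 * √m + 1100 * (m / p)
  · have : R * (#Q : ℝ) ≤ (110 * √m + 1100 * (m / p)) * m := by gcongr
    have : (m : ℝ) ^ 2 / p = m / p * m := by ring
    linarith
  push Not at hsmall
  have hmp' : 0 ≤ (m : ℝ) / p := by positivity
  have : 110 * √(m : ℝ) ≤ R := by linarith
  have hRp : (m : ℝ) * 1100 ≤ R * p := by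
    rw [← div_le_iff₀ hp', mul_div_right_comm]
    linarith [Real.sqrt_nonneg m]
  have hm : (0 : ℝ) < m := by exact_mod_cast hR0.trans_le hRm
  have hsq : 10830 * m ≤ R ^ 2 := by
    have : (10830 : ℝ) * m ≤ R ^ 2 := by nlinarith [Real.sqrt_nonneg m]
    exact_mod_cast this
  have hlt : 1083 * m < p * R := by
    have : (1083 : ℝ) * m < p * R := by linarith
    exact_mod_cast this
  have hcard := card_rich_planes_le hP hRm hR0 hsq hlt hQ hrich
  have hmR : (m : ℝ) ^ 2 / R ≤ m * √m := by
    rw [div_le_iff₀ hR]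
    nlinarith [Real.sqrt_nonneg m]
  calc R * (#Q : ℝ) ≤ R * (2 * 10 ^ 7 * ((m / R) ^ 2 + k * (m / R))) := by gcongr
    _ = 2 * 10 ^ 7 * (m ^ 2 / R + k * m) := by field_simp
    _ ≤ 3 * 10 ^ 7 * (m * √m + k * m + (m : ℝ) ^ 2 / p) := by linarith

theorem card_incidences_le (hp : 0 < p) (hP : #P ≤ m) (hQm : #Q ≤ m) (hQ : CoeffBounded Q k) :
    (#{z ∈ P ×ˢ Q | Incident z.1 z.2} : ℝ) ≤
      3 * 10 ^ 7 * (m * √m + k * m + (m : ℝ) ^ 2 / p) * (1 + Real.log m) := by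
  have hsum : #{z ∈ P ×ˢ Q | Incident z.1 z.2} = ∑ y ∈ Q, #{x ∈ P | Incident x y} := by
    simp only [card_filter, sum_product_right]
  rw [hsum]
  have := sum_pow_succ_le_mul_log (k := 0) (s := Q) (f := fun y => #{x ∈ P | Incident x y})
    (Z := 3 * 10 ^ 7 * (m * √m + k * m + (m : ℝ) ^ 2 / p)) (by positivity)
    (fun y _ => (card_filter_le _ _).trans hP) fun r hr => by
      rw [zero_add, pow_one]
      exact mul_card_rich_planes_le hp hP ((card_filter_le _ _).trans hQm) (mem_Icc.mp hr).2
        (mem_Icc.mp hr).1 (hQ.mono (filter_subset _ _)) fun y hy => (mem_filter.mp hy).2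
  simpa using this

end Incidences

section Collisions

variable {α β : Type*} [DecidableEq β] {T T' : Finset α} {S : Finset β} {f : α → β}

/-- The number of pairs of elements of `T` with the same image under `f`. -/
def collisionCount (T : Finset α) (f : α → β) : ℕ := #{z ∈ T ×ˢ T | f z.1 = f z.2}

theorem collisionCount_eq_sum (hf : ∀ a ∈ T, f a ∈ S) :
    collisionCount T f = ∑ b ∈ S, #{a ∈ T | f a = b} ^ 2 := by
  rw [collisionCount, card_eq_sum_card_fiberwise (t := S) (f := fun z => f z.1)
    fun z hz => hf _ (mem_product.mp (mem_filter.mp hz).1).1]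
  refine sum_congr rfl fun b _ => ?_
  rw [pow_two, ← card_product]
  congr 1
  ext ⟨x, y⟩
  simp only [mem_filter, mem_product]
  constructor
  · rintro ⟨⟨⟨hx, hy⟩, hxy⟩, hxb⟩
    exact ⟨⟨hx, hxb⟩, hy, hxy ▸ hxb⟩
  · rintro ⟨⟨hx, hxb⟩, hy, hyb⟩
    exact ⟨⟨⟨hx, hy⟩, hxb.trans hyb.symm⟩, hxb⟩

theorem card_sq_le_card_mul_collisionCount (hf : ∀ a ∈ T, f a ∈ S) :
    #T ^ 2 ≤ #S * collisionCount T f := by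
  rw [collisionCount_eq_sum hf, card_eq_sum_card_fiberwise (t := S) (f := f) hf]
  exact sq_sum_le_card_mul_sum_sq

theorem collisionCount_mono (h : T ⊆ T') : collisionCount T f ≤ collisionCount T' f :=
  card_le_card (filter_subset_filter _ (product_subset_product h h))

variable {K : Type*} [Field K] [DecidableEq K] {p : ℕ} [CharP K p] {m k : ℕ}

theorem collisionCount_mul_add_le (hp : 0 < p) {U V S : Finset K} (hV : 0 ∉ V)
    (hm : #U * (#V * #S) ≤ m) (hUk : #U ≤ k) (hVk : #V ≤ k) (hSk : #S ≤ k) :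
    (collisionCount (U ×ˢ V ×ˢ S) (fun t => t.1 * t.2.1 + t.2.2) : ℝ) ≤
      3 * 10 ^ 7 * (m * √m + k * m + (m : ℝ) ^ 2 / p) * (1 + Real.log m) := by
  have hT : #(U ×ˢ V ×ˢ S) ≤ m := by rwa [card_product, card_product]
  set P := (U ×ˢ V ×ˢ S).image fun t => (-t.2.1, t.1, t.2.2)
  have hQ : CoeffBounded (U ×ˢ V ×ˢ S) k := by
    refine ⟨fun y hy h => ?_, (card_le_card (image_subset_iff.mpr fun y hy => ?_)).trans hUk,
      (card_le_card (image_subset_iff.mpr fun y hy => ?_)).trans hVk,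
      fun a b => (card_le_card_of_injOn (fun y => y.2.2) (fun y hy => ?_) ?_).trans hSk⟩
    · exact hV (h ▸ (mem_product.mp (mem_product.mp hy).2).1)
    · exact (mem_product.mp hy).1
    · exact (mem_product.mp (mem_product.mp hy).2).1
    · exact (mem_product.mp (mem_product.mp (mem_filter.mp hy).1).2).2
    · intro y hy y' hy' h
      have h₁ := (mem_filter.mp hy).2
      have h₂ := (mem_filter.mp hy').2
      exact Prod.ext (h₁.1.trans h₂.1.symm) (Prod.ext (h₁.2.trans h₂.2.symm) h)
  refine le_trans ?_ (card_incidences_le hp (P := P) (card_image_le.trans hT) hT hQ)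
  rw [Nat.cast_le]
  refine card_le_card_of_injOn
    (fun z => ((-z.2.2.1, z.1.1, z.1.2.2), (z.2.1, z.1.2.1, z.2.2.2))) ?_ ?_
  · rintro ⟨⟨u, v, s⟩, u', v', s'⟩ hz
    simp only [coe_filter, mem_product, Set.mem_ofPred_eq] at hz ⊢
    obtain ⟨⟨⟨hu, hv, hs⟩, hu', hv', hs'⟩, h⟩ := hz
    refine ⟨⟨mem_image.mpr ⟨(u, v', s), by simp [hu, hv', hs], rfl⟩, hu', hv, hs'⟩, ?_⟩
    rw [Incident]
    linear_combination h
  · rintro ⟨⟨u, v, s⟩, u', v', s'⟩ - ⟨⟨u₁, v₁, s₁⟩, u₁', v₁', s₁'⟩ - h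
    simp_all

theorem collisionCount_mul_add_right_le (hp : 0 < p) {A B S : Finset K} (hA : 0 ∉ A)
    (hm : #A * (#B * #S) ≤ m) (hAk : #A ≤ k) (hBk : #B ≤ k) (hSk : #S ≤ k) :
    (collisionCount (A ×ˢ B ×ˢ S) (fun t => t.1 * (t.2.1 + t.2.2)) : ℝ) ≤
      3 * 10 ^ 7 * (m * √m + k * m + (m : ℝ) ^ 2 / p) * (1 + Real.log m) := by
  have hT : #(A ×ˢ B ×ˢ S) ≤ m := by rwa [card_product, card_product]
  set P := (A ×ˢ B ×ˢ S).image fun t => (t.1, t.2.1, -(t.1 * t.2.2))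
  set Q := (A ×ˢ B ×ˢ S).image fun t => (-t.2.1, t.1, -(t.1 * t.2.2)) with hQdef
  have hQmem : ∀ y ∈ Q, -y.1 ∈ B ∧ y.2.1 ∈ A ∧ ∃ s ∈ S, y.2.2 = -(y.2.1 * s) := by
    simp only [hQdef, forall_mem_image, mem_product, neg_neg]
    exact fun t ht => ⟨ht.2.1, ht.1, t.2.2, ht.2.2, rfl⟩
  have hQ : CoeffBounded Q k := by
    refine ⟨fun y hy h => hA (h ▸ (hQmem y hy).2.1),
      (card_le_card_of_injOn Neg.neg ?_ neg_injective.injOn).trans hBk,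
      (card_le_card (image_subset_iff.mpr fun y hy => (hQmem y hy).2.1)).trans hAk,
      fun a b => (card_le_card (t := S.image fun s => (a, b, -(b * s))) fun y hy => ?_).trans
        (card_image_le.trans hSk)⟩
    · rw [Set.MapsTo, coe_image, Set.forall_mem_image]
      exact fun y hy => (hQmem y hy).1
    · obtain ⟨hyQ, rfl, rfl⟩ := mem_filter.mp hy
      obtain ⟨-, -, s, hs, hys⟩ := hQmem y hyQ
      exact mem_image.mpr ⟨s, hs, by rw [← hys]⟩
  refine le_trans ?_
    (card_incidences_le hp (P := P) (card_image_le.trans hT) (card_image_le.trans hT) hQ)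
  rw [Nat.cast_le]
  refine card_le_card_of_injOn
    (fun z => ((z.2.1, z.1.2.1, -(z.2.1 * z.2.2.2)), (-z.2.2.1, z.1.1, -(z.1.1 * z.1.2.2)))) ?_ ?_
  · rintro ⟨⟨a, b, s⟩, a', b', s'⟩ hz
    simp only [coe_filter, mem_product, Set.mem_ofPred_eq] at hz ⊢
    obtain ⟨⟨⟨ha, hb, hs⟩, ha', hb', hs'⟩, h⟩ := hz
    refine ⟨⟨mem_image.mpr ⟨(a', b, s'), by simp [ha', hb, hs'], rfl⟩,
      mem_image.mpr ⟨(a, b', s), by simp [ha, hb', hs], rfl⟩⟩, ?_⟩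
    rw [Incident]
    linear_combination h
  · rintro ⟨⟨a, b, s⟩, a', b', s'⟩ hz ⟨⟨a₁, b₁, s₁⟩, a₁', b₁', s₁'⟩ - h
    simp only [coe_filter, mem_product, Set.mem_ofPred_eq] at hz
    have ha : a ≠ 0 := fun h => hA (h ▸ hz.1.1.1)
    have ha' : a' ≠ 0 := fun h => hA (h ▸ hz.1.2.1)
    simp only [Prod.mk.injEq, neg_inj] at h
    obtain ⟨⟨rfl, rfl, h'⟩, rfl, rfl, h⟩ := h
    rw [mul_left_cancel₀ ha h, mul_left_cancel₀ ha' h']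

end Collisions

section Differences

variable {G : Type*} [AddCommGroup G] [DecidableEq G] {A B P Y : Finset G} {r : ℕ} {t : G}

theorem addConvolution_neg_eq_card_filter (A B : Finset G) (t : G) :
    A.addConvolution (-B) t = #{b ∈ B | b + t ∈ A} := by
  rw [← card_sub_eq]
  refine card_nbij' (fun z => z.2) (fun b => (b + t, b)) ?_ ?_ ?_ ?_
  · rintro ⟨a, b⟩ hab
    obtain ⟨hmem, rfl⟩ := mem_filter.mp hab
    simpa [and_comm] using hmem
  · intro b hb
    simpa [and_comm] using hb
  · rintro ⟨a, b⟩ h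
    obtain ⟨-, rfl⟩ := mem_filter.mp h
    simp
  · exact fun b _ => rfl

theorem sum_addConvolution_neg_le (A B Y : Finset G) :
    ∑ t ∈ Y, A.addConvolution (-B) t ≤ #A * #B := by
  simp only [← card_sub_eq]
  rw [← card_product, sum_card_fiberwise_eq_card_filter]
  exact card_filter_le _ _

theorem addEnergy_eq_collisionCount_sub (A B : Finset G) :
    E[A, B] = collisionCount (A ×ˢ B) (fun z => z.1 - z.2) := by
  rw [addEnergy_eq_card_filter, collisionCount]
  refine card_nbij' (fun z => ((z.1.1, z.2.2), (z.2.1, z.1.2)))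
    (fun z => ((z.1.1, z.2.2), (z.2.1, z.1.2))) ?_ ?_ (fun _ _ => rfl) (fun _ _ => rfl)
  all_goals
    rintro ⟨⟨a, b⟩, a', b'⟩ h
    simp only [coe_filter, mem_product, Set.mem_ofPred_eq] at h ⊢
    obtain ⟨⟨⟨ha, hb⟩, ha', hb'⟩, h⟩ := h
    exact ⟨⟨⟨ha, hb'⟩, ha', hb⟩, by grind⟩

theorem addEnergy_eq_sum_sq_addConvolution_neg (h : A - B ⊆ Y) :
    E[A, B] = ∑ t ∈ Y, A.addConvolution (-B) t ^ 2 := by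
  simp only [addEnergy_eq_collisionCount_sub, ← card_sub_eq]
  exact collisionCount_eq_sum fun z hz =>
    h (sub_mem_sub (mem_product.mp hz).1 (mem_product.mp hz).2)

theorem addEnergy_le_card_sq_mul_card (A B : Finset G) : E[A, B] ≤ #A ^ 2 * #B := by
  calc E[A, B] = ∑ t ∈ A - B, A.addConvolution (-B) t ^ 2 :=
        addEnergy_eq_sum_sq_addConvolution_neg subset_rfl
    _ ≤ ∑ t ∈ A - B, #A * A.addConvolution (-B) t := by
        simp only [pow_two]
        gcongr
        exact addConvolution_le_card_left
    _ ≤ #A ^ 2 * #B := by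
        rw [← mul_sum, pow_two, mul_assoc]
        exact Nat.mul_le_mul_left _ (sum_addConvolution_neg_le A B _)

/-- The elements with at least `r` representations `a - b`, `a ∈ A`, `b ∈ B`. -/
def richDiffs (A B : Finset G) (r : ℕ) : Finset G := {t ∈ A - B | r ≤ A.addConvolution (-B) t}

theorem mem_richDiffs (hr : 0 < r) : t ∈ richDiffs A B r ↔ r ≤ A.addConvolution (-B) t := by
  rw [richDiffs, mem_filter, and_iff_right_iff_imp, sub_eq_add_neg, ← addConvolution_pos]
  exact hr.trans_le

theorem mul_card_richDiffs_le (A B : Finset G) (r : ℕ) : r * #(richDiffs A B r) ≤ #A * #B := by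
  rw [mul_comm, ← smul_eq_mul]
  exact (card_nsmul_le_sum _ _ _ fun t ht => (mem_filter.mp ht).2).trans
    (sum_addConvolution_neg_le A B _)

theorem sq_mul_card_richDiffs_le (A B : Finset G) (r : ℕ) :
    r ^ 2 * #(richDiffs A B r) ≤ E[A, B] := by
  rw [mul_comm, ← smul_eq_mul, addEnergy_eq_sum_sq_addConvolution_neg subset_rfl]
  exact (card_nsmul_le_sum _ _ _ fun t ht => Nat.pow_le_pow_left (mem_filter.mp ht).2 2).trans
    (sum_le_sum_of_subset (filter_subset _ _))

end Differences

section PopularSums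

variable {α β : Type*} {s : Finset α}

theorem card_le_two_mul_card_filter_popular [DecidableEq β] {f : α → β} {S : Finset β} {N : ℕ}
    (hf : ∀ a ∈ s, f a ∈ S) (hN : 0 < N) (hS : #S ≤ N) :
    #s ≤ 2 * #{a ∈ s | #s ≤ 2 * N * #{a' ∈ s | f a' = f a}} := by
  have hsplit := card_filter_add_card_filter_not (s := s)
    fun a => #s ≤ 2 * N * #{a' ∈ s | f a' = f a}
  set rare := {a ∈ s | ¬ #s ≤ 2 * N * #{a' ∈ s | f a' = f a}}
  have hcard : 2 * N * #rare ≤ N * #s := by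
    rw [card_eq_sum_card_fiberwise (t := S) (f := f) fun a ha => hf a (mem_filter.mp ha).1, mul_sum]
    refine (sum_le_card_nsmul S _ #s fun b _ => ?_).trans (Nat.mul_le_mul_right _ hS)
    rcases eq_empty_or_nonempty {a ∈ rare | f a = b} with h | ⟨a, ha⟩
    · rw [h, card_empty, mul_zero]
      exact Nat.zero_le _
    · obtain ⟨ha', rfl⟩ := mem_filter.mp ha
      exact (Nat.mul_le_mul_left _ (card_le_card
        (filter_subset_filter _ (filter_subset _ _)))).trans (not_le.mp (mem_filter.mp ha').2).le
  have : 2 * #rare ≤ #s := Nat.le_of_mul_le_mul_left (by linarith) hN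
  omega

theorem card_filter_pow_four_le_mul_card_rectangles (s : Finset α) (t : Finset β)
    (R : α → β → Prop) [∀ a b, Decidable (R a b)] :
    #{z ∈ s ×ˢ t | R z.1 z.2} ^ 4 ≤ (#s * #t) ^ 2 * #{x ∈ (s ×ˢ s) ×ˢ t ×ˢ t |
      (R x.1.1 x.2.1 ∧ R x.1.2 x.2.1) ∧ R x.1.1 x.2.2 ∧ R x.1.2 x.2.2} := by
  have hdeg : #{z ∈ s ×ˢ t | R z.1 z.2} = ∑ b ∈ t, #{a ∈ s | R a b} := by
    simp only [card_filter, sum_product_right]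
  have hcodeg : ∑ b ∈ t, #{a ∈ s | R a b} ^ 2 =
      ∑ q ∈ s ×ˢ s, #{b ∈ t | R q.1 b ∧ R q.2 b} := by
    have hsq (b : β) : #{a ∈ s | R a b} ^ 2 = #{q ∈ s ×ˢ s | R q.1 b ∧ R q.2 b} := by
      rw [pow_two, ← card_product, ← filter_product]
    simp only [hsq]
    simp only [card_filter]
    exact sum_comm
  have hrect : #{x ∈ (s ×ˢ s) ×ˢ t ×ˢ t |
      (R x.1.1 x.2.1 ∧ R x.1.2 x.2.1) ∧ R x.1.1 x.2.2 ∧ R x.1.2 x.2.2} =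
      ∑ q ∈ s ×ˢ s, #{b ∈ t | R q.1 b ∧ R q.2 b} ^ 2 := by
    rw [card_filter, sum_product]
    refine sum_congr rfl fun q _ => ?_
    rw [pow_two, ← card_product, ← filter_product, card_filter]
  calc #{z ∈ s ×ˢ t | R z.1 z.2} ^ 4 = ((∑ b ∈ t, #{a ∈ s | R a b}) ^ 2) ^ 2 := by rw [hdeg]; ring
    _ ≤ (#t * ∑ b ∈ t, #{a ∈ s | R a b} ^ 2) ^ 2 :=
        Nat.pow_le_pow_left sq_sum_le_card_mul_sum_sq 2
    _ = #t ^ 2 * (∑ q ∈ s ×ˢ s, #{b ∈ t | R q.1 b ∧ R q.2 b}) ^ 2 := by rw [hcodeg, mul_pow]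
    _ ≤ #t ^ 2 * (#(s ×ˢ s) * ∑ q ∈ s ×ˢ s, #{b ∈ t | R q.1 b ∧ R q.2 b} ^ 2) :=
        Nat.mul_le_mul_left _ sq_sum_le_card_mul_sum_sq
    _ = _ := by rw [hrect, card_product]; ring

variable {G : Type*} [AddCommGroup G] [DecidableEq G]

/-- The sums of `A` whose number of representations is at least half of the average `#A ^ 2 / N`
over a set of `N` sums. -/
def popularSums (A : Finset G) (N : ℕ) : Finset G :=
  {x ∈ A + A | #A ^ 2 ≤ 2 * N * A.addConvolution A x}

theorem card_sq_le_two_mul_card_popularSums_pairs {A : Finset G} {N : ℕ} (hN : 0 < N)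
    (h : #(A + A) ≤ N) : #A ^ 2 ≤ 2 * #{z ∈ A ×ˢ A | z.1 + z.2 ∈ popularSums A N} := by
  have hadd : ∀ z ∈ A ×ˢ A, z.1 + z.2 ∈ A + A := fun z hz =>
    add_mem_add (mem_product.mp hz).1 (mem_product.mp hz).2
  have hpop := card_le_two_mul_card_filter_popular hadd hN h
  rw [card_product, ← pow_two] at hpop
  refine hpop.trans_eq (congrArg (2 * #·) (filter_congr fun z hz => ?_))
  rw [popularSums, mem_filter, and_iff_right (hadd z hz)]
  rfl

/-- The pairs of pairs `((a, b), (c, d))` in `A` all four of whose cross sums lie in `P`. -/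
def sumRectangles (A P : Finset G) : Finset ((G × G) × G × G) :=
  {x ∈ (A ×ˢ A) ×ˢ A ×ˢ A |
    (x.1.1 + x.2.1 ∈ P ∧ x.1.2 + x.2.1 ∈ P) ∧ x.1.1 + x.2.2 ∈ P ∧ x.1.2 + x.2.2 ∈ P}

theorem card_sumRectangles_sq_le (A P : Finset G) :
    #(sumRectangles A P) ^ 2 ≤ E[P, P] * ∑ t ∈ A - A, A.addConvolution (-A) t ^ 4 := by
  rw [addEnergy_eq_collisionCount_sub, collisionCount]
  refine (card_sq_le_card_mul_collisionCount (f := fun x : (G × G) × G × G =>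
    ((x.1.1 + x.2.1, x.1.2 + x.2.1), (x.1.1 + x.2.2, x.1.2 + x.2.2))) ?_).trans
      (Nat.mul_le_mul_left _ ?_)
  · intro x hx
    simp only [sumRectangles, mem_filter, mem_product] at hx ⊢
    exact ⟨hx.2, by abel⟩
  rw [collisionCount, card_eq_sum_card_fiberwise (t := A - A) (f := fun z => z.1.1.1 - z.2.1.1)]
  swap
  · intro z hz
    simp only [sumRectangles, coe_filter, mem_filter, mem_product, Set.mem_ofPred_eq] at hz
    exact sub_mem_sub hz.1.1.1.1.1 hz.1.2.1.1.1
  refine sum_le_sum fun t _ => ?_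
  set D := {z ∈ A ×ˢ A | z.1 - z.2 = t} with hD
  have hpow : A.addConvolution (-A) t ^ 4 = #(D ×ˢ D ×ˢ D ×ˢ D) := by
    simp only [card_product, hD, card_sub_eq]
    ring
  rw [hpow, filter_filter]
  refine card_le_card_of_injOn (fun z => ((z.1.1.1, z.2.1.1), (z.1.1.2, z.2.1.2),
    (z.2.2.1, z.1.2.1), (z.2.2.2, z.1.2.2))) ?_ ?_
  · rintro ⟨⟨⟨a, b⟩, c, d⟩, ⟨a', b'⟩, c', d'⟩ hz
    simp only [sumRectangles, coe_filter, coe_product, mem_filter, mem_product, Set.mem_ofPred_eq,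
      Prod.mk.injEq, hD, Set.mem_prod] at hz ⊢
    obtain ⟨⟨⟨⟨⟨ha, hb⟩, hc, hd⟩, -⟩, ⟨⟨ha', hb'⟩, hc', hd'⟩, -⟩, ⟨⟨hac, hbc⟩, had, _⟩, rfl⟩ := hz
    exact ⟨⟨⟨ha, ha'⟩, rfl⟩, ⟨⟨hb, hb'⟩, by grind⟩, ⟨⟨hc', hc⟩, by grind⟩, ⟨hd', hd⟩, by grind⟩
  · rintro ⟨⟨⟨a, b⟩, c, d⟩, ⟨a', b'⟩, c', d'⟩ - ⟨⟨⟨a₁, b₁⟩, c₁, d₁⟩, ⟨a₁', b₁'⟩, c₁', d₁'⟩ - h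
    simp_all

theorem card_pow_eight_le_addEnergy_popularSums {A : Finset G} {N : ℕ} (hA : A.Nonempty)
    (hN : 0 < N) (h : #(A + A) ≤ N) :
    #A ^ 8 ≤ 256 * E[popularSums A N, popularSums A N] *
      ∑ t ∈ A - A, A.addConvolution (-A) t ^ 4 := by
  set P := popularSums A N
  have hrect : #A ^ 4 ≤ 16 * #(sumRectangles A P) := by
    refine Nat.le_of_mul_le_mul_left ?_ (pow_pos hA.card_pos 4)
    calc #A ^ 4 * #A ^ 4 = (#A ^ 2) ^ 4 := by ring
      _ ≤ (2 * #{z ∈ A ×ˢ A | z.1 + z.2 ∈ P}) ^ 4 :=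
          Nat.pow_le_pow_left (card_sq_le_two_mul_card_popularSums_pairs hN h) 4
      _ = 16 * #{z ∈ A ×ˢ A | z.1 + z.2 ∈ P} ^ 4 := by ring
      _ ≤ 16 * ((#A * #A) ^ 2 * #(sumRectangles A P)) := Nat.mul_le_mul_left _
          (card_filter_pow_four_le_mul_card_rectangles A A fun a c => a + c ∈ P)
      _ = #A ^ 4 * (16 * #(sumRectangles A P)) := by ring
  calc #A ^ 8 = (#A ^ 4) ^ 2 := by ring
    _ ≤ (16 * #(sumRectangles A P)) ^ 2 := Nat.pow_le_pow_left hrect 2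
    _ = 256 * #(sumRectangles A P) ^ 2 := by ring
    _ ≤ 256 * (E[P, P] * ∑ t ∈ A - A, A.addConvolution (-A) t ^ 4) :=
        Nat.mul_le_mul_left _ (card_sumRectangles_sq_le A P)
    _ = _ := by ring

end PopularSums

section EnergyBounds

variable {K : Type*} [Field K] [DecidableEq K] {p : ℕ} [CharP K p] {A P Y : Finset K}
  {m n k N r : ℕ}

/-- The constant and the logarithm lost in one application of the collision bounds, for parameter
sets of size at most `n ^ 6`. -/
noncomputable def collisionLoss (n : ℕ) : ℝ := 6 * 10 ^ 7 * (1 + 6 * Real.log n)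

theorem one_le_collisionLoss (n : ℕ) : 1 ≤ collisionLoss n := by
  rw [collisionLoss]
  linarith [Real.log_natCast_nonneg n]

theorem le_collisionLoss_mul_add (hm : m ≤ n ^ 6) (hk : (k : ℝ) ≤ N + √m) :
    3 * 10 ^ 7 * (m * √m + k * m + (m : ℝ) ^ 2 / p) * (1 + Real.log m) ≤
      collisionLoss n * (m * √m + N * m + (m : ℝ) ^ 2 / p) := by
  have hlog : Real.log m ≤ 6 * Real.log n := by
    rcases Nat.eq_zero_or_pos m with rfl | hm0
    · simpa using Real.log_natCast_nonneg n
    · calc Real.log m ≤ Real.log ((n : ℝ) ^ 6) :=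
            Real.log_le_log (by exact_mod_cast hm0) (by exact_mod_cast hm)
        _ = 6 * Real.log n := by rw [Real.log_pow, Nat.cast_ofNat]
  have := Real.log_natCast_nonneg m
  have hmp : (0 : ℝ) ≤ (m : ℝ) ^ 2 / p := by positivity
  have hNm : (0 : ℝ) ≤ N * m := by positivity
  calc 3 * 10 ^ 7 * (m * √m + k * m + (m : ℝ) ^ 2 / p) * (1 + Real.log m)
      ≤ 3 * 10 ^ 7 * (m * √m + (N + √m) * m + (m : ℝ) ^ 2 / p) * (1 + 6 * Real.log n) := by gcongr
    _ ≤ 3 * 10 ^ 7 * (2 * (m * √m + N * m + (m : ℝ) ^ 2 / p)) * (1 + 6 * Real.log n) := by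
        gcongr
        linarith
    _ = collisionLoss n * (m * √m + N * m + (m : ℝ) ^ 2 / p) := by rw [collisionLoss]; ring

theorem le_collisionLoss_mul (hm : m ≤ n ^ 6) (hk : k ^ 2 ≤ m) :
    3 * 10 ^ 7 * (m * √m + k * m + (m : ℝ) ^ 2 / p) * (1 + Real.log m) ≤
      collisionLoss n * (m * √m + (m : ℝ) ^ 2 / p) := by
  have hkm : (k : ℝ) ≤ √m := Real.le_sqrt_of_sq_le (by exact_mod_cast hk)
  simpa using le_collisionLoss_mul_add (N := 0) hm (by simpa using hkm)

theorem card_mul_sq_le_mul_collisionCount (hY : ∀ y ∈ Y, r ≤ A.addConvolution (-A) y) :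
    (#A * (r * #Y)) ^ 2 ≤
      #(A * A) * collisionCount (A ×ˢ A ×ˢ Y) (fun t => t.1 * (t.2.1 + t.2.2)) := by
  set T := A ×ˢ {z ∈ A ×ˢ Y | z.1 + z.2 ∈ A} with hT
  have hcard : #A * (r * #Y) ≤ #T := by
    rw [hT, card_product, card_filter, sum_product_right, mul_comm r, ← smul_eq_mul #Y]
    refine Nat.mul_le_mul_left _ (card_nsmul_le_sum _ _ _ fun y hy => ?_)
    rw [← card_filter, ← addConvolution_neg_eq_card_filter]
    exact hY y hy
  have hmul : ∀ t ∈ T, t.1 * (t.2.1 + t.2.2) ∈ A * A := fun t ht =>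
    mul_mem_mul (mem_product.mp ht).1 (mem_filter.mp (mem_product.mp ht).2).2
  calc (#A * (r * #Y)) ^ 2 ≤ #T ^ 2 := Nat.pow_le_pow_left hcard 2
    _ ≤ #(A * A) * collisionCount T (fun t => t.1 * (t.2.1 + t.2.2)) :=
        card_sq_le_card_mul_collisionCount hmul
    _ ≤ _ := Nat.mul_le_mul_left _
        (collisionCount_mono (product_subset_product_right (filter_subset _ _)))

theorem collisionCount_mul_add_right_self_le (hp : 0 < p) (hA : 0 ∉ A) (hY0 : 0 < #Y)
    (hY : #Y ≤ #A ^ 2) :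
    (collisionCount (A ×ˢ A ×ˢ Y) (fun t => t.1 * (t.2.1 + t.2.2)) : ℝ) ≤
      collisionLoss #A * (#A ^ 2 * #Y * (#A * √(#Y : ℝ)) + (#A ^ 2 * #Y) ^ 2 / p) := by
  have hm : #A ^ 2 * #Y ≤ #A ^ 6 := by
    rcases Nat.eq_zero_or_pos #A with h | h
    · simp [h]
    calc #A ^ 2 * #Y ≤ #A ^ 2 * #A ^ 2 := Nat.mul_le_mul_left _ hY
      _ = #A ^ 4 := by ring
      _ ≤ #A ^ 6 := Nat.pow_le_pow_right h (by norm_num)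
  have hk : max #A #Y ^ 2 ≤ #A ^ 2 * #Y := by
    rcases max_choice #A #Y with h | h <;> rw [h]
    · exact Nat.le_mul_of_pos_right _ hY0
    · rw [pow_two #Y]
      exact Nat.mul_le_mul_right _ hY
  have hsqrt : √((#A ^ 2 * #Y : ℕ) : ℝ) = #A * √(#Y : ℝ) := by
    push_cast
    rw [Real.sqrt_mul (by positivity), Real.sqrt_sq (by positivity)]
  have := (collisionCount_mul_add_right_le (B := A) (S := Y) hp hA (by rw [pow_two, mul_assoc])
    (le_max_left _ _) (le_max_left _ _) (le_max_right _ _)).trans (le_collisionLoss_mul hm hk)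
  rw [hsqrt] at this
  exact_mod_cast this

theorem sq_mul_sqrt_card_le (hp : 0 < p) (hA : 0 ∉ A) (hAn : 0 < #A) (hN : #(A * A) ≤ N)
    (hY0 : 0 < #Y) (hYle : #Y ≤ #A ^ 2) (hY : ∀ y ∈ Y, r ≤ A.addConvolution (-A) y) :
    (r : ℝ) ^ 2 * √(#Y : ℝ) ≤
      N * collisionLoss #A * #A + N * collisionLoss #A * #A ^ 2 / p * √(#Y : ℝ) := by
  have hcoll := collisionCount_mul_add_right_self_le hp hA hY0 hYle
  have hle : ((#A : ℝ) * (r * #Y)) ^ 2 ≤ N * collisionCount (A ×ˢ A ×ˢ Y)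
      (fun t => t.1 * (t.2.1 + t.2.2)) := by
    exact_mod_cast (card_mul_sq_le_mul_collisionCount hY).trans (Nat.mul_le_mul_right _ hN)
  obtain ⟨w, hw⟩ : ∃ w : ℝ, w = √(#Y : ℝ) := ⟨_, rfl⟩
  have hw2 : w ^ 2 = #Y := by rw [hw, Real.sq_sqrt (Nat.cast_nonneg _)]
  have hw0 : 0 < w := hw ▸ Real.sqrt_pos.mpr (by exact_mod_cast hY0)
  have hA0 : (0 : ℝ) < #A := by exact_mod_cast hAn
  rw [← hw, ← hw2] at hcoll
  rw [← hw2] at hle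
  rw [← hw]
  refine le_of_mul_le_mul_left ?_ (by positivity : 0 < (#A : ℝ) ^ 2 * w ^ 3)
  calc (#A : ℝ) ^ 2 * w ^ 3 * (r ^ 2 * w) = (#A * (r * w ^ 2)) ^ 2 := by ring
    _ ≤ N * (collisionLoss #A * (#A ^ 2 * w ^ 2 * (#A * w) + (#A ^ 2 * w ^ 2) ^ 2 / p)) :=
        hle.trans (by gcongr)
    _ = _ := by ring

theorem pow_four_mul_card_richDiffs_le (hp : 0 < p) (hA : 0 ∉ A) (hN : #(A * A) ≤ N) (hr : 0 < r)
    (hrA : r ≤ #A) : (r : ℝ) ^ 4 * #(richDiffs A A r) ≤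
      4 * N ^ 2 * collisionLoss #A ^ 2 * #A ^ 2 + 2 * N * collisionLoss #A * #A ^ 5 / p := by
  have hL := one_le_collisionLoss #A
  have : (0 : ℝ) < p := by exact_mod_cast hp
  rcases Nat.eq_zero_or_pos #(richDiffs A A r) with hY0 | hY0
  · rw [hY0, Nat.cast_zero, mul_zero]
    positivity
  have hrY : r * #(richDiffs A A r) ≤ #A ^ 2 := pow_two #A ▸ mul_card_richDiffs_le A A r
  have hmain := sq_mul_sqrt_card_le hp hA (hr.trans_le hrA) hN hY0
    ((Nat.le_mul_of_pos_left _ hr).trans hrY) fun y hy => (mem_filter.mp hy).2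
  obtain ⟨w, hw⟩ : ∃ w : ℝ, w = √(#(richDiffs A A r) : ℝ) := ⟨_, rfl⟩
  have hw2 : w ^ 2 = #(richDiffs A A r) := by rw [hw, Real.sq_sqrt (Nat.cast_nonneg _)]
  have hrw : (r : ℝ) * w ^ 2 ≤ #A ^ 2 := by rw [hw2]; exact_mod_cast hrY
  have hw0 : 0 ≤ w := hw ▸ Real.sqrt_nonneg _
  rw [← hw] at hmain
  rw [← hw2]
  set L := collisionLoss #A
  by_cases hlarge : 2 * (N * L * #A ^ 2 / p) ≤ (r : ℝ) ^ 2
  · have : (r : ℝ) ^ 2 * w ≤ 2 * (N * L * #A) := by nlinarith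
    calc (r : ℝ) ^ 4 * w ^ 2 = (r ^ 2 * w) ^ 2 := by ring
      _ ≤ (2 * (N * L * #A)) ^ 2 := by gcongr
      _ = 4 * N ^ 2 * L ^ 2 * #A ^ 2 := by ring
      _ ≤ _ := le_add_of_nonneg_right (by positivity)
  · calc (r : ℝ) ^ 4 * w ^ 2 = r ^ 2 * (r * (r * w ^ 2)) := by ring
      _ ≤ 2 * (N * L * #A ^ 2 / p) * (#A * #A ^ 2) := by
          gcongr
          exact (not_le.mp hlarge).le
      _ = 2 * N * L * #A ^ 5 / p := by ring
      _ ≤ _ := le_add_of_nonneg_left (by positivity)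

theorem sum_addConvolution_neg_pow_four_le (hp : 0 < p) (hA : 0 ∉ A) (hN : #(A * A) ≤ N) :
    ∑ t ∈ A - A, (A.addConvolution (-A) t : ℝ) ^ 4 ≤
      4 * (4 * N ^ 2 * collisionLoss #A ^ 2 * #A ^ 2 + 2 * N * collisionLoss #A * #A ^ 5 / p) *
        (1 + Real.log #A) := by
  have hL := one_le_collisionLoss #A
  have := sum_pow_succ_le_mul_log (k := 3) (s := A - A) (f := A.addConvolution (-A))
    (Z := 4 * N ^ 2 * collisionLoss #A ^ 2 * #A ^ 2 + 2 * N * collisionLoss #A * #A ^ 5 / p)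
    (by positivity) (fun t _ => addConvolution_le_card_left) fun r hr =>
      pow_four_mul_card_richDiffs_le hp hA hN (mem_Icc.mp hr).1 (mem_Icc.mp hr).2
  norm_num at this ⊢
  exact this

theorem card_sq_mul_addEnergy_le_collisionCount (hA : 0 ∉ A) :
    #A ^ 2 * E[A, P] ≤
      collisionCount ((A * A) ×ˢ A⁻¹ ×ˢ P) (fun t => t.1 * t.2.1 + t.2.2) := by
  rw [addEnergy_eq_collisionCount_sub, collisionCount, pow_two, ← card_product, ← card_product]
  refine card_le_card_of_injOn (fun z => ((z.2.1.1 * z.1.1, z.1.1⁻¹, z.2.2.2),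
    (z.2.2.1 * z.1.2, z.1.2⁻¹, z.2.1.2))) ?_ ?_
  · rintro ⟨⟨c, c'⟩, ⟨b, y⟩, b', y'⟩ hz
    simp only [coe_product, Set.mem_prod, coe_filter, mem_product, Set.mem_ofPred_eq,
      mem_coe] at hz ⊢
    obtain ⟨⟨hc, hc'⟩, ⟨⟨hb, hy⟩, hb', hy'⟩, h⟩ := hz
    refine ⟨⟨⟨mul_mem_mul hb hc, inv_mem_inv hc, hy'⟩, mul_mem_mul hb' hc', inv_mem_inv hc', hy⟩,
      ?_⟩
    rw [mul_inv_cancel_right₀ (ne_of_mem_of_not_mem hc hA),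
      mul_inv_cancel_right₀ (ne_of_mem_of_not_mem hc' hA)]
    linear_combination h
  · rintro ⟨⟨c, c'⟩, ⟨b, y⟩, b', y'⟩ hz ⟨⟨c₁, c₁'⟩, ⟨b₁, y₁⟩, b₁', y₁'⟩ - h
    obtain ⟨hc, hc'⟩ := mem_product.mp (mem_product.mp hz).1
    simp only [Prod.mk.injEq, inv_inj] at h
    obtain ⟨⟨hbc, rfl, rfl⟩, hbc', rfl, rfl⟩ := h
    rw [mul_right_cancel₀ (ne_of_mem_of_not_mem hc hA) hbc,
      mul_right_cancel₀ (ne_of_mem_of_not_mem hc' hA) hbc']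

end EnergyBounds

section PopularEnergy

variable {K : Type*} [Field K] [DecidableEq K] {A P : Finset K} {M : ℕ}

theorem card_mul_sum_addConvolution_le (hA : 0 ∉ A) (P : Finset K) (v : K) :
    #A * ∑ z ∈ P ×ˢ P with z.1 - z.2 = v, A.addConvolution A z.1 ≤
      #{z ∈ ((A * A) ×ˢ A⁻¹) ×ˢ A ×ˢ P | z.1.1 * z.1.2 + (z.2.1 - z.2.2) = v} := by
  simp only [← card_add_eq]
  rw [← card_sigma, ← card_product]
  refine card_le_card_of_injOn
    (fun z => ((z.2.2.1 * z.1, z.1⁻¹), (z.2.2.2, z.2.1.2))) ?_ ?_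
  · rintro ⟨c, ⟨x, y⟩, a, b⟩ hz
    simp only [coe_product, Set.mem_prod, mem_coe, mem_sigma, coe_filter, mem_filter, mem_product,
      Set.mem_ofPred_eq] at hz ⊢
    obtain ⟨hc, ⟨⟨_, hy⟩, hxy⟩, ⟨ha, hb⟩, hab⟩ := hz
    refine ⟨⟨⟨mul_mem_mul ha hc, inv_mem_inv hc⟩, hb, hy⟩, ?_⟩
    rw [mul_inv_cancel_right₀ (ne_of_mem_of_not_mem hc hA)]
    linear_combination hab + hxy
  · rintro ⟨c, ⟨x, y⟩, a, b⟩ hz ⟨c', ⟨x', y'⟩, a', b'⟩ hz' h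
    simp only [coe_product, Set.mem_prod, mem_coe, mem_sigma, mem_filter] at hz hz'
    simp only [Prod.mk.injEq, inv_inj] at h
    obtain ⟨⟨hac, rfl⟩, rfl, rfl⟩ := h
    obtain rfl := mul_right_cancel₀ (ne_of_mem_of_not_mem hz.1 hA) hac
    obtain rfl := hz.2.2.2.symm.trans hz'.2.2.2
    rfl

theorem card_mul_add_sub_le_sum_card_richDiffs (U V A P : Finset K) (v : K) :
    #{z ∈ (U ×ˢ V) ×ˢ A ×ˢ P | z.1.1 * z.1.2 + (z.2.1 - z.2.2) = v} ≤
      ∑ r ∈ Icc 1 #A, #{t ∈ U ×ˢ V ×ˢ richDiffs A P r | t.1 * t.2.1 + t.2.2 = v} := by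
  have hlevels (t : K) : A.addConvolution (-P) t = #{r ∈ Icc 1 #A | t ∈ richDiffs A P r} := by
    have hle : A.addConvolution (-P) t ≤ #A := addConvolution_le_card_left
    have : {r ∈ Icc 1 #A | t ∈ richDiffs A P r} = Icc 1 (A.addConvolution (-P) t) := by
      ext r
      rw [mem_filter, mem_Icc, mem_Icc]
      constructor
      · exact fun h => ⟨h.1.1, (mem_richDiffs h.1.1).mp h.2⟩
      · exact fun h => ⟨⟨h.1, h.2.trans hle⟩, (mem_richDiffs h.1).mpr h.2⟩
    rw [this, Nat.card_Icc, Nat.add_sub_cancel]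
  calc #{z ∈ (U ×ˢ V) ×ˢ A ×ˢ P | z.1.1 * z.1.2 + (z.2.1 - z.2.2) = v}
      = ∑ q ∈ U ×ˢ V, A.addConvolution (-P) (v - q.1 * q.2) := by
        simp only [← card_sub_eq, card_filter, eq_sub_iff_add_eq']
        exact sum_product _ _ _
    _ = ∑ r ∈ Icc 1 #A, #{q ∈ U ×ˢ V | v - q.1 * q.2 ∈ richDiffs A P r} := by
        simp only [hlevels, card_filter]
        exact sum_comm
    _ ≤ _ := sum_le_sum fun r _ => card_le_card_of_injOn (fun q => (q.1, q.2, v - q.1 * q.2))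
        (fun q hq => by simpa [and_assoc] using hq) (fun q _ q' _ h => by simp_all [Prod.ext_iff])

theorem card_pow_three_mul_addConvolution_neg_le (hA : 0 ∉ A)
    (hP : ∀ x ∈ P, #A ^ 2 ≤ M * A.addConvolution A x) (v : K) :
    #A ^ 3 * P.addConvolution (-P) v ≤
      M * ∑ r ∈ Icc 1 #A, #{t ∈ (A * A) ×ˢ A⁻¹ ×ˢ richDiffs A P r | t.1 * t.2.1 + t.2.2 = v} := by
  calc #A ^ 3 * P.addConvolution (-P) v
      = #A * ∑ z ∈ P ×ˢ P with z.1 - z.2 = v, #A ^ 2 := by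
        rw [sum_const, smul_eq_mul, card_sub_eq]
        ring
    _ ≤ #A * ∑ z ∈ P ×ˢ P with z.1 - z.2 = v, M * A.addConvolution A z.1 :=
        Nat.mul_le_mul_left _ <| sum_le_sum fun z hz =>
          hP _ (mem_product.mp (mem_filter.mp hz).1).1
    _ = M * (#A * ∑ z ∈ P ×ˢ P with z.1 - z.2 = v, A.addConvolution A z.1) := by
        rw [← mul_sum]
        ring
    _ ≤ _ := Nat.mul_le_mul_left _ <| (card_mul_sum_addConvolution_le hA P v).trans <|
        card_mul_add_sub_le_sum_card_richDiffs _ _ A P v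

theorem sq_sum_Icc_le_mul_log (n : ℕ) (g : ℕ → ℝ) :
    (∑ r ∈ Icc 1 n, g r) ^ 2 ≤ (1 + Real.log n) * ∑ r ∈ Icc 1 n, r * g r ^ 2 := by
  calc (∑ r ∈ Icc 1 n, g r) ^ 2
      ≤ (∑ r ∈ Icc 1 n, (r : ℝ)⁻¹) * ∑ r ∈ Icc 1 n, r * g r ^ 2 := by
        refine sum_sq_le_sum_mul_sum_of_sq_le_mul _ (fun r _ => by positivity)
          (fun r _ => by positivity) fun r hr => ?_
        have hr0 : (r : ℝ) ≠ 0 := Nat.cast_ne_zero.mpr (Nat.one_le_iff_ne_zero.mp (mem_Icc.mp hr).1)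
        rw [inv_mul_cancel_left₀ hr0]
    _ ≤ _ := by
        gcongr
        exact sum_Icc_inv_le_one_add_log n

theorem sum_sq_card_fiber_le_collisionCount {α β : Type*} [DecidableEq β] (T : Finset α)
    (f : α → β) (S : Finset β) : ∑ b ∈ S, #{a ∈ T | f a = b} ^ 2 ≤ collisionCount T f := by
  rw [collisionCount_eq_sum (S := S ∪ T.image f)
    fun a ha => mem_union_right _ (mem_image_of_mem f ha)]
  exact sum_le_sum_of_subset subset_union_left

theorem card_pow_six_mul_addEnergy_le (hA : 0 ∉ A)
    (hP : ∀ x ∈ P, #A ^ 2 ≤ M * A.addConvolution A x) :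
    (#A : ℝ) ^ 6 * E[P, P] ≤ M ^ 2 * ((1 + Real.log #A) * ∑ r ∈ Icc 1 #A,
      (r : ℝ) * collisionCount ((A * A) ×ˢ A⁻¹ ×ˢ richDiffs A P r)
        (fun t => t.1 * t.2.1 + t.2.2)) := by
  set c : ℕ → K → ℕ := fun r v =>
    #{t ∈ (A * A) ×ˢ A⁻¹ ×ˢ richDiffs A P r | t.1 * t.2.1 + t.2.2 = v}
  have hpoint (v : K) : ((#A : ℝ) ^ 3 * P.addConvolution (-P) v) ^ 2 ≤
      M ^ 2 * ((1 + Real.log #A) * ∑ r ∈ Icc 1 #A, r * (c r v : ℝ) ^ 2) := by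
    have : (#A : ℝ) ^ 3 * P.addConvolution (-P) v ≤ M * ∑ r ∈ Icc 1 #A, (c r v : ℝ) := by
      exact_mod_cast card_pow_three_mul_addConvolution_neg_le hA hP v
    calc ((#A : ℝ) ^ 3 * P.addConvolution (-P) v) ^ 2
        ≤ (M * ∑ r ∈ Icc 1 #A, (c r v : ℝ)) ^ 2 := by gcongr
      _ ≤ _ := by
          rw [mul_pow]
          gcongr
          exact sq_sum_Icc_le_mul_log _ _
  have hcoll (r : ℕ) : ∑ v ∈ P - P, (c r v : ℝ) ^ 2 ≤
      collisionCount ((A * A) ×ˢ A⁻¹ ×ˢ richDiffs A P r) (fun t => t.1 * t.2.1 + t.2.2) := by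
    exact_mod_cast sum_sq_card_fiber_le_collisionCount _ _ _
  calc (#A : ℝ) ^ 6 * E[P, P]
      = ∑ v ∈ P - P, ((#A : ℝ) ^ 3 * P.addConvolution (-P) v) ^ 2 := by
        rw [addEnergy_eq_sum_sq_addConvolution_neg subset_rfl, Nat.cast_sum, mul_sum]
        refine sum_congr rfl fun v _ => ?_
        rw [mul_pow, ← pow_mul, Nat.cast_pow]
    _ ≤ ∑ v ∈ P - P, M ^ 2 * ((1 + Real.log #A) * ∑ r ∈ Icc 1 #A, r * (c r v : ℝ) ^ 2) :=
        sum_le_sum fun v _ => hpoint v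
    _ = M ^ 2 * ((1 + Real.log #A) * ∑ r ∈ Icc 1 #A, r * ∑ v ∈ P - P, (c r v : ℝ) ^ 2) := by
        simp only [← mul_sum]
        rw [sum_comm]
        simp only [mul_sum]
    _ ≤ _ := by
        gcongr with r
        exact hcoll r

end PopularEnergy

section SumProductBound

variable {K : Type*} [Field K] [DecidableEq K] {p : ℕ} [CharP K p] {A P Y : Finset K}
  {N r : ℕ} {ν q e : ℝ}

theorem collisionCount_mul_inv_add_le (hp : 0 < p) (hA : 0 ∉ A) (hM : #(A * A) ≤ N)
    (hAN : #A ≤ N) (hN : N ≤ #A ^ 2) (hY : #Y ≤ N * #A) :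
    (collisionCount ((A * A) ×ˢ A⁻¹ ×ˢ Y) (fun t => t.1 * t.2.1 + t.2.2) : ℝ) ≤
      collisionLoss #A * ((N * #A * #Y : ℝ) * √(N * #A * #Y : ℝ) + N * (N * #A * #Y : ℝ) +
        (N * #A * #Y : ℝ) ^ 2 / p) := by
  have hm : N * #A * #Y ≤ #A ^ 6 :=
    calc N * #A * #Y ≤ N * #A * (N * #A) := Nat.mul_le_mul_left _ hY
      _ ≤ #A ^ 2 * #A * (#A ^ 2 * #A) := by gcongr
      _ = #A ^ 6 := by ring
  have hk : ((N + #Y : ℕ) : ℝ) ≤ N + √(N * #A * #Y : ℕ) := by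
    rw [Nat.cast_add]
    refine add_le_add_right (Real.le_sqrt_of_sq_le ?_) _
    exact_mod_cast (pow_two #Y).trans_le (Nat.mul_le_mul_right _ hY)
  have hcoll := collisionCount_mul_add_le (U := A * A) (V := A⁻¹) (S := Y) (m := N * #A * #Y)
    (k := N + #Y) hp (by simpa [mem_inv'] using hA)
    (by rw [card_inv, mul_assoc]; exact Nat.mul_le_mul_right _ hM)
    (by omega) (by rw [card_inv]; omega) (by omega)
  exact_mod_cast hcoll.trans (le_collisionLoss_mul_add hm hk)

theorem pow_mul_addEnergy_le (hA : 0 ∉ A) (hM : #(A * A) ≤ N) (hAN : #A ≤ N) (hN : N ≤ #A ^ 2)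
    (hP : #P ≤ N) (hν : 1 ≤ ν) (hAν : (#A : ℝ) = ν ^ 64) (hpν : ν ^ 114 ≤ p)
    (hNν : (N : ℝ) ≤ ν ^ 78) :
    ν ^ 32 * E[A, P] ≤ 3 * collisionLoss #A * N ^ 3 := by
  have hL := one_le_collisionLoss #A
  have hp : (0 : ℝ) < p := (pow_pos (by linarith) 114).trans_le hpν
  have hA0 : 0 < #A := by
    have : (0 : ℝ) < #A := hAν ▸ by positivity
    exact_mod_cast this
  have hcoll := collisionCount_mul_inv_add_le (by exact_mod_cast hp) hA hM hAN hN
    (hP.trans (Nat.le_mul_of_pos_right _ hA0))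
  have hE : (#A : ℝ) ^ 2 * E[A, P] ≤
      collisionCount ((A * A) ×ˢ A⁻¹ ×ˢ P) (fun t => t.1 * t.2.1 + t.2.2) := by
    exact_mod_cast card_sq_mul_addEnergy_le_collisionCount hA
  have hm : (N * #A * #P : ℝ) ≤ (N * ν ^ 32) ^ 2 := by
    calc (N * #A * #P : ℝ) ≤ N * #A * N := by gcongr
      _ = (N * ν ^ 32) ^ 2 := by rw [hAν]; ring
  have hNp : (N * ν ^ 32) ^ 4 / p ≤ N ^ 3 * ν ^ 96 := by
    rw [div_le_iff₀ hp]
    calc (N * ν ^ 32) ^ 4 = N ^ 3 * ν ^ 96 * (N * ν ^ 32) := by ring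
      _ ≤ N ^ 3 * ν ^ 96 * (ν ^ 78 * ν ^ 32) := by gcongr
      _ = N ^ 3 * ν ^ 96 * ν ^ 110 := by ring
      _ ≤ N ^ 3 * ν ^ 96 * p := by
          gcongr
          exact (pow_le_pow_right₀ hν (by norm_num)).trans hpν
  refine le_of_mul_le_mul_left ?_ (by positivity : 0 < ν ^ 96)
  calc ν ^ 96 * (ν ^ 32 * E[A, P]) = (#A : ℝ) ^ 2 * E[A, P] := by rw [hAν]; ring
    _ ≤ collisionLoss #A * ((N * ν ^ 32) ^ 2 * (N * ν ^ 32) + N * (N * ν ^ 32) ^ 2 +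
          ((N * ν ^ 32) ^ 2) ^ 2 / p) := by
        refine (hE.trans hcoll).trans ?_
        gcongr
        exact Real.sqrt_le_iff.mpr ⟨by positivity, hm⟩
    _ = collisionLoss #A * (N ^ 3 * ν ^ 96 + N ^ 3 * ν ^ 64 + (N * ν ^ 32) ^ 4 / p) := by ring
    _ ≤ collisionLoss #A * (N ^ 3 * ν ^ 96 + N ^ 3 * ν ^ 96 + N ^ 3 * ν ^ 96) := by
        gcongr
        norm_num
    _ = ν ^ 96 * (3 * collisionLoss #A * N ^ 3) := by ring

theorem sq_mul_collision_terms_le {c d q r w e : ℝ} (hc : 0 ≤ c) (hd : 0 ≤ d) (hq : 0 ≤ q)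
    (hr : 0 ≤ r) (hw : 0 ≤ w) (hwq : r * w ^ 2 ≤ q ^ 2) (hwe : r * w ≤ e)
    (hce : c * e ≤ q ^ 3) :
    r ^ 2 * ((q * w) ^ 2 * (q * w) + c * (q * w) ^ 2 + ((q * w) ^ 2) ^ 2 / d) ≤
      2 * q ^ 5 * e + q ^ 8 / d := by
  have he : 0 ≤ e := (mul_nonneg hr hw).trans hwe
  calc r ^ 2 * ((q * w) ^ 2 * (q * w) + c * (q * w) ^ 2 + ((q * w) ^ 2) ^ 2 / d)
      = q ^ 3 * (r * w ^ 2 * (r * w)) + c * q ^ 2 * (r * w) ^ 2 + q ^ 4 * (r * w ^ 2) ^ 2 / d := by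
        ring
    _ ≤ q ^ 3 * (q ^ 2 * e) + c * q ^ 2 * e ^ 2 + q ^ 4 * (q ^ 2) ^ 2 / d := by gcongr
    _ = q ^ 5 * e + c * e * (q ^ 2 * e) + q ^ 8 / d := by ring
    _ ≤ q ^ 5 * e + q ^ 3 * (q ^ 2 * e) + q ^ 8 / d := by gcongr
    _ = 2 * q ^ 5 * e + q ^ 8 / d := by ring

theorem mul_le_pow_three_of_sq_eq_addEnergy (hP : #P ≤ N) (hq0 : 0 ≤ q)
    (hq : q ^ 2 = N * #A) (he : e ^ 2 = E[A, P]) : N * e ≤ q ^ 3 := by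
  have hA : (#A : ℝ) ^ 2 ≤ #A ^ 3 := by
    rcases Nat.eq_zero_or_pos #A with h | h
    · simp [h]
    · exact_mod_cast Nat.pow_le_pow_right h (by norm_num)
  have hE : (E[A, P] : ℝ) ≤ #A ^ 2 * N := by
    exact_mod_cast (addEnergy_le_card_sq_mul_card A P).trans (Nat.mul_le_mul_left _ hP)
  refine le_of_pow_le_pow_left₀ two_ne_zero (by positivity) ?_
  calc ((N : ℝ) * e) ^ 2 = N ^ 2 * E[A, P] := by rw [mul_pow, he]
    _ ≤ (N : ℝ) ^ 2 * (#A ^ 2 * N) := by gcongr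
    _ = (N : ℝ) ^ 3 * #A ^ 2 := by ring
    _ ≤ (N : ℝ) ^ 3 * #A ^ 3 := by gcongr
    _ = (q ^ 3) ^ 2 := by rw [← mul_pow, ← hq]; ring

theorem mul_collisionCount_richDiffs_le (hp : 0 < p) (hA : 0 ∉ A) (hM : #(A * A) ≤ N)
    (hAN : #A ≤ N) (hN : N ≤ #A ^ 2) (hP : #P ≤ N) (hq0 : 0 ≤ q) (hq : q ^ 2 = N * #A)
    (he0 : 0 ≤ e) (he : e ^ 2 = E[A, P]) (hr : 0 < r) :
    (r : ℝ) * collisionCount ((A * A) ×ˢ A⁻¹ ×ˢ richDiffs A P r)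
        (fun t => t.1 * t.2.1 + t.2.2) ≤
      collisionLoss #A * (2 * q ^ 5 * e + q ^ 8 / p) * (r : ℝ)⁻¹ := by
  have hL := one_le_collisionLoss #A
  have hrY : r * #(richDiffs A P r) ≤ N * #A :=
    (mul_card_richDiffs_le A P r).trans (by rw [mul_comm]; gcongr)
  have hcoll := collisionCount_mul_inv_add_le hp hA hM hAN hN
    ((Nat.le_mul_of_pos_left _ hr).trans hrY)
  have hNe := mul_le_pow_three_of_sq_eq_addEnergy hP hq0 hq he
  obtain ⟨w, hw, hw0⟩ : ∃ w : ℝ, w ^ 2 = #(richDiffs A P r) ∧ 0 ≤ w :=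
    ⟨√(#(richDiffs A P r) : ℝ), Real.sq_sqrt (Nat.cast_nonneg _), Real.sqrt_nonneg _⟩
  have hwq : (r : ℝ) * w ^ 2 ≤ q ^ 2 := by rw [hw, hq]; exact_mod_cast hrY
  have hwe : (r : ℝ) * w ≤ e := by
    refine le_of_pow_le_pow_left₀ two_ne_zero he0 ?_
    rw [mul_pow, hw, he]
    exact_mod_cast sq_mul_card_richDiffs_le A P r
  rw [← hq, ← hw, ← mul_pow, Real.sqrt_sq (by positivity)] at hcoll
  have hr' : (0 : ℝ) < r := by exact_mod_cast hr
  rw [← div_eq_mul_inv, le_div_iff₀ hr', mul_right_comm, ← pow_two]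
  calc (r : ℝ) ^ 2 * collisionCount ((A * A) ×ˢ A⁻¹ ×ˢ richDiffs A P r)
        (fun t => t.1 * t.2.1 + t.2.2)
      ≤ r ^ 2 * (collisionLoss #A *
          ((q * w) ^ 2 * (q * w) + N * (q * w) ^ 2 + ((q * w) ^ 2) ^ 2 / p)) := by gcongr
    _ = collisionLoss #A *
          (r ^ 2 * ((q * w) ^ 2 * (q * w) + N * (q * w) ^ 2 + ((q * w) ^ 2) ^ 2 / p)) := by ring
    _ ≤ collisionLoss #A * (2 * q ^ 5 * e + q ^ 8 / p) := by
        gcongr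
        exact sq_mul_collision_terms_le (by positivity) (by positivity) hq0 hr'.le hw0 hwq hwe hNe

theorem two_mul_pow_five_mul_add_le {L s d : ℝ} (hL : 1 ≤ L) (hs : 0 ≤ s) (hν : 1 ≤ ν)
    (hd : ν ^ 114 ≤ d) (he : ν ^ 32 * e ^ 2 ≤ 3 * L * (s ^ 2) ^ 3) :
    2 * (s * ν ^ 32) ^ 5 * e + (s * ν ^ 32) ^ 8 / d ≤ 5 * L * (s ^ 2) ^ 4 * ν ^ 144 := by
  have hd0 : 0 < d := (pow_pos (by linarith) 114).trans_le hd
  have heL : ν ^ 16 * e ≤ 2 * L * s ^ 3 := by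
    refine le_of_pow_le_pow_left₀ two_ne_zero (by positivity) ?_
    calc (ν ^ 16 * e) ^ 2 = ν ^ 32 * e ^ 2 := by ring
      _ ≤ 3 * L * (s ^ 2) ^ 3 := he
      _ ≤ (2 * L) ^ 2 * (s ^ 2) ^ 3 := by
          gcongr
          nlinarith
      _ = (2 * L * s ^ 3) ^ 2 := by ring
  have hfirst : 2 * (s * ν ^ 32) ^ 5 * e ≤ 4 * L * (s ^ 2) ^ 4 * ν ^ 144 :=
    calc 2 * (s * ν ^ 32) ^ 5 * e = 2 * s ^ 5 * ν ^ 144 * (ν ^ 16 * e) := by ring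
      _ ≤ 2 * s ^ 5 * ν ^ 144 * (2 * L * s ^ 3) := by gcongr
      _ = 4 * L * (s ^ 2) ^ 4 * ν ^ 144 := by ring
  have hsecond : (s * ν ^ 32) ^ 8 / d ≤ L * (s ^ 2) ^ 4 * ν ^ 144 := by
    rw [div_le_iff₀ hd0]
    calc (s * ν ^ 32) ^ 8 = 1 * (s ^ 2) ^ 4 * (ν ^ 142 * ν ^ 114) := by ring
      _ ≤ L * (s ^ 2) ^ 4 * (ν ^ 144 * d) := by
          gcongr
          norm_num
      _ = L * (s ^ 2) ^ 4 * ν ^ 144 * d := by ring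
  linarith

theorem sum_mul_collisionCount_richDiffs_le (hA : 0 ∉ A) (hM : #(A * A) ≤ N) (hAN : #A ≤ N)
    (hN : N ≤ #A ^ 2) (hP : #P ≤ N) (hν : 1 ≤ ν) (hAν : (#A : ℝ) = ν ^ 64) (hpν : ν ^ 114 ≤ p)
    (hNν : (N : ℝ) ≤ ν ^ 78) :
    ∑ r ∈ Icc 1 #A, (r : ℝ) * collisionCount ((A * A) ×ˢ A⁻¹ ×ˢ richDiffs A P r)
        (fun t => t.1 * t.2.1 + t.2.2) ≤
      5 * collisionLoss #A ^ 2 * N ^ 4 * ν ^ 144 * (1 + Real.log #A) := by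
  have hL := one_le_collisionLoss #A
  have := Real.log_natCast_nonneg #A
  have hp : 0 < p := by
    have : (0 : ℝ) < p := (pow_pos (by linarith) 114).trans_le hpν
    exact_mod_cast this
  obtain ⟨s, hs, hs0⟩ : ∃ s : ℝ, s ^ 2 = N ∧ 0 ≤ s :=
    ⟨√(N : ℝ), Real.sq_sqrt (Nat.cast_nonneg _), Real.sqrt_nonneg _⟩
  obtain ⟨e, he, he0⟩ : ∃ e : ℝ, e ^ 2 = E[A, P] ∧ 0 ≤ e :=
    ⟨√(E[A, P] : ℝ), Real.sq_sqrt (Nat.cast_nonneg _), Real.sqrt_nonneg _⟩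
  have hE := pow_mul_addEnergy_le hA hM hAN hN hP hν hAν hpν hNν
  rw [← hs, ← he] at hE
  have hq : (s * ν ^ 32) ^ 2 = N * #A := by rw [mul_pow, hs, hAν]; ring
  calc _ ≤ ∑ r ∈ Icc 1 #A, collisionLoss #A *
          (2 * (s * ν ^ 32) ^ 5 * e + (s * ν ^ 32) ^ 8 / p) * (r : ℝ)⁻¹ :=
        sum_le_sum fun r hr => mul_collisionCount_richDiffs_le hp hA hM hAN hN hP (by positivity)
          hq he0 he (mem_Icc.mp hr).1
    _ ≤ collisionLoss #A * (5 * collisionLoss #A * (s ^ 2) ^ 4 * ν ^ 144) *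
          (1 + Real.log #A) := by
        rw [← mul_sum]
        gcongr
        · exact two_mul_pow_five_mul_add_le hL hs0 hν hpν hE
        · exact sum_Icc_inv_le_one_add_log _
    _ = _ := by rw [hs]; ring

theorem pow_mul_addEnergy_popularSums_le (hA : 0 ∉ A) (hS : #(A + A) ≤ N) (hM : #(A * A) ≤ N)
    (hAN : #A ≤ N) (hN : N ≤ #A ^ 2) (hν : 1 ≤ ν) (hAν : (#A : ℝ) = ν ^ 64) (hpν : ν ^ 114 ≤ p)
    (hNν : (N : ℝ) ≤ ν ^ 78) :
    ν ^ 240 * E[popularSums A N, popularSums A N] ≤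
      20 * (1 + Real.log #A) ^ 2 * collisionLoss #A ^ 2 * N ^ 6 := by
  have := Real.log_natCast_nonneg #A
  have hsum := sum_mul_collisionCount_richDiffs_le (P := popularSums A N) hA hM hAN hN
    ((card_filter_le _ _).trans hS) hν hAν hpν hNν
  have henergy := card_pow_six_mul_addEnergy_le (P := popularSums A N) (M := 2 * N) hA
    fun x hx => (mem_filter.mp hx).2
  rw [Nat.cast_mul, Nat.cast_ofNat] at henergy
  refine le_of_mul_le_mul_left ?_ (by positivity : 0 < ν ^ 144)
  calc ν ^ 144 * (ν ^ 240 * E[popularSums A N, popularSums A N])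
      = (#A : ℝ) ^ 6 * E[popularSums A N, popularSums A N] := by rw [hAν]; ring
    _ ≤ (2 * N) ^ 2 * ((1 + Real.log #A) *
          (5 * collisionLoss #A ^ 2 * N ^ 4 * ν ^ 144 * (1 + Real.log #A))) :=
        henergy.trans (by gcongr)
    _ = _ := by ring

theorem sum_addConvolution_neg_pow_four_le_pow (hA : 0 ∉ A) (hM : #(A * A) ≤ N) (hν : 1 ≤ ν)
    (hAν : (#A : ℝ) = ν ^ 64) (hpν : ν ^ 114 ≤ p) (hNν : (N : ℝ) ≤ ν ^ 78) :
    ∑ t ∈ A - A, (A.addConvolution (-A) t : ℝ) ^ 4 ≤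
      24 * (1 + Real.log #A) * collisionLoss #A ^ 2 * N * ν ^ 206 := by
  have := Real.log_natCast_nonneg #A
  have hL := one_le_collisionLoss #A
  have hp : (0 : ℝ) < p := (pow_pos (by linarith) 114).trans_le hpν
  have hfirst : 4 * N ^ 2 * collisionLoss #A ^ 2 * #A ^ 2 ≤
      4 * collisionLoss #A ^ 2 * N * ν ^ 206 :=
    calc 4 * N ^ 2 * collisionLoss #A ^ 2 * #A ^ 2
        = 4 * collisionLoss #A ^ 2 * N * (N * ν ^ 128) := by rw [hAν]; ring
      _ ≤ 4 * collisionLoss #A ^ 2 * N * (ν ^ 78 * ν ^ 128) := by gcongr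
      _ = _ := by ring
  have hsecond : 2 * N * collisionLoss #A * #A ^ 5 / p ≤
      2 * collisionLoss #A ^ 2 * N * ν ^ 206 := by
    rw [div_le_iff₀ hp]
    calc 2 * N * collisionLoss #A * #A ^ 5
        = 2 * (collisionLoss #A * 1) * N * (ν ^ 206 * ν ^ 114) := by rw [hAν]; ring
      _ ≤ 2 * (collisionLoss #A * collisionLoss #A) * N * (ν ^ 206 * p) := by
          gcongr
      _ = _ := by ring
  calc _ ≤ _ := sum_addConvolution_neg_pow_four_le (by exact_mod_cast hp) hA hM
    _ ≤ 4 * (4 * collisionLoss #A ^ 2 * N * ν ^ 206 + 2 * collisionLoss #A ^ 2 * N * ν ^ 206) *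
          (1 + Real.log #A) := by gcongr
    _ = _ := by ring

theorem pow_le_mul_of_card_add_le (hA : 0 ∉ A) (hS : #(A + A) ≤ N) (hM : #(A * A) ≤ N)
    (hAN : #A ≤ N) (hN : N ≤ #A ^ 2) (hν : 1 ≤ ν) (hAν : (#A : ℝ) = ν ^ 64)
    (hpν : ν ^ 114 ≤ p) :
    ν ^ 78 ≤ 122880 * (1 + Real.log #A) ^ 3 * collisionLoss #A ^ 4 * N := by
  have := Real.log_natCast_nonneg #A
  have hA0 : 0 < #A := by
    have : (0 : ℝ) < #A := hAν ▸ by positivity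
    exact_mod_cast this
  have hloss : 1 ≤ 122880 * (1 + Real.log #A) ^ 3 * collisionLoss #A ^ 4 :=
    one_le_mul_of_one_le_of_one_le (one_le_mul_of_one_le_of_one_le (by norm_num)
      (one_le_pow₀ (by linarith))) (one_le_pow₀ (one_le_collisionLoss _))
  rcases le_or_gt (ν ^ 78) (N : ℝ) with hNν | hNν
  · exact hNν.trans (le_mul_of_one_le_left (Nat.cast_nonneg _) hloss)
  have henergy := pow_mul_addEnergy_popularSums_le hA hS hM hAN hN hν hAν hpν hNν.le
  have hfourth := sum_addConvolution_neg_pow_four_le_pow hA hM hν hAν hpν hNν.le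
  have hpopular : (#A : ℝ) ^ 8 ≤ 256 * E[popularSums A N, popularSums A N] *
      ∑ t ∈ A - A, (A.addConvolution (-A) t : ℝ) ^ 4 := by
    exact_mod_cast card_pow_eight_le_addEnergy_popularSums (card_pos.mp hA0)
      (hA0.trans_le hAN) hS
  set Λ := 122880 * (1 + Real.log #A) ^ 3 * collisionLoss #A ^ 4 with hΛ
  refine le_of_pow_le_pow_left₀ (n := 7) (by norm_num) (by positivity) ?_
  refine le_of_mul_le_mul_left ?_ (by positivity : 0 < ν ^ 206)
  calc ν ^ 206 * (ν ^ 78) ^ 7 = ν ^ 240 * (#A : ℝ) ^ 8 := by rw [hAν]; ring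
    _ ≤ ν ^ 240 * (256 * E[popularSums A N, popularSums A N] *
          ∑ t ∈ A - A, (A.addConvolution (-A) t : ℝ) ^ 4) := by gcongr
    _ = 256 * (ν ^ 240 * E[popularSums A N, popularSums A N]) *
          ∑ t ∈ A - A, (A.addConvolution (-A) t : ℝ) ^ 4 := by ring
    _ ≤ 256 * (20 * (1 + Real.log #A) ^ 2 * collisionLoss #A ^ 2 * N ^ 6) *
          (24 * (1 + Real.log #A) * collisionLoss #A ^ 2 * N * ν ^ 206) := by gcongr
    _ = ν ^ 206 * (Λ * N ^ 7) := by rw [hΛ]; ring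
    _ ≤ ν ^ 206 * (Λ ^ 7 * N ^ 7) := by
        gcongr
        exact le_self_pow₀ hloss (by norm_num)
    _ = ν ^ 206 * (Λ * N) ^ 7 := by rw [mul_pow Λ]

theorem rpow_card_le_of_zero_notMem (hA : 0 ∉ A) (hne : A.Nonempty)
    (hAp : (#A : ℝ) ≤ (p : ℝ) ^ ((32 : ℝ) / 57)) :
    (#A : ℝ) ^ ((39 : ℝ) / 32) ≤
      122880 * (1 + Real.log #A) ^ 3 * collisionLoss #A ^ 4 * max #(A + A) #(A * A) := by
  have hA1 : (1 : ℝ) ≤ #A := by exact_mod_cast hne.card_pos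
  have hpow (k : ℕ) : ((#A : ℝ) ^ ((1 : ℝ) / 64)) ^ k = (#A : ℝ) ^ ((k : ℝ) / 64) := by
    rw [← Real.rpow_natCast, ← Real.rpow_mul (by positivity), one_div_mul_eq_div]
  have hroot : ((#A : ℝ) ^ ((1 : ℝ) / 64)) ^ 114 ≤ p :=
    calc ((#A : ℝ) ^ ((1 : ℝ) / 64)) ^ 114 = (#A : ℝ) ^ ((57 : ℝ) / 32) := by rw [hpow]; norm_num
      _ ≤ ((p : ℝ) ^ ((32 : ℝ) / 57)) ^ ((57 : ℝ) / 32) := by gcongr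
      _ = p := by rw [← Real.rpow_mul (by positivity)]; norm_num
  have hbound := pow_le_mul_of_card_add_le (N := max #(A + A) #(A * A)) hA (le_max_left _ _)
    (le_max_right _ _) (le_max_of_le_left (card_le_card_add_right hne))
    (pow_two #A ▸ max_le card_add_le card_mul_le) (Real.one_le_rpow hA1 (by norm_num))
    (by rw [hpow]; norm_num) hroot
  rw [hpow] at hbound
  norm_num at hbound ⊢
  exact hbound

theorem rpow_card_le_four_mul_rpow_card_erase (hB : (A.erase 0).Nonempty) :
    (#A : ℝ) ^ ((39 : ℝ) / 32) ≤ 4 * (#(A.erase 0) : ℝ) ^ ((39 : ℝ) / 32) := by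
  have hcard : (#A : ℝ) ≤ 2 * #(A.erase 0) := by
    have := pred_card_le_card_erase (s := A) (a := 0)
    have := hB.card_pos
    exact_mod_cast (by omega : #A ≤ 2 * #(A.erase 0))
  calc (#A : ℝ) ^ ((39 : ℝ) / 32) ≤ (2 * #(A.erase 0) : ℝ) ^ ((39 : ℝ) / 32) := by gcongr
    _ = 2 ^ ((39 : ℝ) / 32) * (#(A.erase 0) : ℝ) ^ ((39 : ℝ) / 32) :=
        Real.mul_rpow two_pos.le (Nat.cast_nonneg _)
    _ ≤ 2 ^ (2 : ℝ) * (#(A.erase 0) : ℝ) ^ ((39 : ℝ) / 32) := by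
        gcongr <;> norm_num
    _ = 4 * (#(A.erase 0) : ℝ) ^ ((39 : ℝ) / 32) := by norm_num

/-- The constant of the sum-product bound. -/
noncomputable def sumProductConst : ℝ := 4 * (122880 * 2 ^ 3 * (42 * 10 ^ 7) ^ 4)

theorem log_factors_le_sumProductConst_mul {n m : ℕ} (hn : 0 < n) (hnm : n ≤ m) :
    4 * (122880 * (1 + Real.log n) ^ 3 * collisionLoss n ^ 4) ≤
      sumProductConst * max 1 (Real.log m) ^ 7 := by
  have hL := one_le_collisionLoss n
  have := Real.log_natCast_nonneg n
  have hlog : Real.log n ≤ max 1 (Real.log m) :=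
    (Real.log_le_log (by exact_mod_cast hn) (by exact_mod_cast hnm)).trans (le_max_right _ _)
  have hone : 1 ≤ max 1 (Real.log m) := le_max_left _ _
  have hloss : collisionLoss n ≤ 42 * 10 ^ 7 * max 1 (Real.log m) := by
    rw [collisionLoss]
    linarith
  calc 4 * (122880 * (1 + Real.log n) ^ 3 * collisionLoss n ^ 4)
      ≤ 4 * (122880 * (2 * max 1 (Real.log m)) ^ 3 *
          (42 * 10 ^ 7 * max 1 (Real.log m)) ^ 4) := by
        gcongr
        linarith
    _ = sumProductConst * max 1 (Real.log m) ^ 7 := by rw [sumProductConst]; ring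

theorem rpow_card_le_sumProductConst_mul (hA : A.Nonempty)
    (hAp : (#A : ℝ) ≤ (p : ℝ) ^ ((32 : ℝ) / 57)) :
    (#A : ℝ) ^ ((39 : ℝ) / 32) ≤
      sumProductConst * max 1 (Real.log #A) ^ 7 * max #(A + A) #(A * A) := by
  have hBA : A.erase 0 ⊆ A := erase_subset 0 A
  have hcard : #(A.erase 0) ≤ #A := card_le_card hBA
  rcases (A.erase 0).eq_empty_or_nonempty with hB | hB
  · have hA0 : A = {0} := ((erase_eq_empty_iff A 0).mp hB).resolve_left hA.ne_empty
    norm_num [hA0, sumProductConst]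
  have hmax : max #(A.erase 0 + A.erase 0) #(A.erase 0 * A.erase 0) ≤ max #(A + A) #(A * A) :=
    max_le_max (card_le_card (add_subset_add hBA hBA)) (card_le_card (mul_subset_mul hBA hBA))
  have hbound := rpow_card_le_of_zero_notMem (notMem_erase 0 A) hB
    ((Nat.cast_le.mpr hcard).trans hAp)
  calc (#A : ℝ) ^ ((39 : ℝ) / 32) ≤ 4 * (#(A.erase 0) : ℝ) ^ ((39 : ℝ) / 32) :=
        rpow_card_le_four_mul_rpow_card_erase hB
    _ ≤ 4 * (122880 * (1 + Real.log #(A.erase 0)) ^ 3 * collisionLoss #(A.erase 0) ^ 4) *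
          max #(A.erase 0 + A.erase 0) #(A.erase 0 * A.erase 0) := by
        rw [mul_assoc]
        exact mul_le_mul_of_nonneg_left hbound (by norm_num)
    _ ≤ sumProductConst * max 1 (Real.log #A) ^ 7 * max #(A + A) #(A * A) :=
        mul_le_mul (log_factors_le_sumProductConst_mul hB.card_pos hcard) (by exact_mod_cast hmax)
          (by positivity) (by rw [sumProductConst]; positivity)

end SumProductBound

end SumProduct

theorem stmt_16_general :
    ∃ C : ℝ, 0 < C ∧
      ∀ {K : Type*} [Field K] [DecidableEq K] (p : ℕ) [CharP K p] (A : Finset K), A.Nonempty →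
        (A.card : ℝ) ≤ (p : ℝ) ^ ((32 : ℝ) / 57) →
        (A.card : ℝ) ^ ((39 : ℝ) / 32) ≤
          C * (max 1 (Real.log A.card)) ^ C * (max (A + A).card (A * A).card : ℕ) := by
  refine ⟨SumProduct.sumProductConst, by norm_num [SumProduct.sumProductConst], ?_⟩
  intro K _ _ p _ A hA hAp
  have hC : (7 : ℕ) ≤ SumProduct.sumProductConst := by norm_num [SumProduct.sumProductConst]
  have hlog := Real.rpow_le_rpow_of_exponent_le (le_max_left 1 (Real.log A.card)) hC
  rw [Real.rpow_natCast] at hlog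
  calc (A.card : ℝ) ^ ((39 : ℝ) / 32) ≤ SumProduct.sumProductConst *
        max 1 (Real.log A.card) ^ 7 * max (A + A).card (A * A).card :=
      mod_cast SumProduct.rpow_card_le_sumProductConst_mul hA hAp
    _ ≤ _ := by
      rw [Nat.cast_max]
      gcongr

theorem stmt_16 :
    ∃ C : ℝ, 0 < C ∧
      ∀ (p : ℕ), p.Prime →
        ∀ (A : Finset (ZMod p)), A.Nonempty →
          (A.card : ℝ) ≤ (p : ℝ) ^ ((64 : ℝ) / 117) →
          (A.card : ℝ) ^ ((39 : ℝ) / 32) ≤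
            C * (max 1 (Real.log A.card)) ^ C * (max (A + A).card (A * A).card : ℕ) := by
  obtain ⟨C, hC, h⟩ := stmt_16_general
  refine ⟨C, hC, fun p hp A hne hA => haveI := Fact.mk hp; h p A hne (hA.trans ?_)⟩
  exact Real.rpow_le_rpow_of_exponent_le (by exact_mod_cast hp.one_le) (by norm_num)
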